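/- arXiv:1407.1222 — 7 statements merged into one kernel-verified Lean document; each statement's English description precedes it below -/
import Mathlib

section
/- Assume the Riemann hypothesis. Then there exist real constants C₁ and C₂ such that for all real x ≥ 2, Σ_{m ≤ x} Σ_{n ≤ x} τ_{1,2}(m·n) = C₁·x² + C₂·x^{3/2} + O(x^{7/5+ε}) for every ε > 0. -/
open Filter Asymptotics

/-- `τ_{1,2}(n)` is the number of ordered pairs `(a,b)` of positive integers with `a·b² = n`. -/
noncomputable def tau12 (n : ℕ) : ℕ :=
  Nat.card {q : ℕ × ℕ // 0 < q.1 ∧ 0 < q.2 ∧ q.1 * q.2 ^ 2 = n}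

theorem limit_squeeze (u d : ℕ → ℝ) (hu : Antitone u) (hv : Monotone (fun n => u n - d n))
    (hd : ∀ n, 0 ≤ d n) : ∃ L : ℝ, ∀ n, 0 ≤ u n - L ∧ u n - L ≤ d n := by
  have key : ∀ m n, u m - d m ≤ u n := by
    intro m n
    rcases le_total m n with h | h
    · have := hv h
      have := hd n
      simp only at *
      linarith
    · have := hu h
      have := hd m
      linarith
  have hb : BddBelow (Set.range u) := ⟨u 0 - d 0, by rintro _ ⟨n, rfl⟩; exact key 0 n⟩
  refine ⟨⨅ n, u n, fun n => ⟨?_, ?_⟩⟩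
  · have := ciInf_le hb n
    linarith
  · have := le_ciInf (fun k => key n k)
    linarith

theorem sum_inv_sq_asymp : ∃ A : ℝ, ∀ Z : ℕ, 1 ≤ Z →
    0 ≤ (∑ b ∈ Finset.Icc 1 Z, 1 / (b : ℝ) ^ 2) + 1 / Z - A ∧
    (∑ b ∈ Finset.Icc 1 Z, 1 / (b : ℝ) ^ 2) + 1 / Z - A ≤ 1 / (Z : ℝ) ^ 2 := by
  suffices H : ∃ L : ℝ, ∀ n : ℕ, _ from by
    obtain ⟨L, hL⟩ := H
    refine ⟨L, fun Z hZ => ?_⟩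
    obtain ⟨n, rfl⟩ := Nat.exists_eq_add_of_le' hZ
    exact hL n
  refine limit_squeeze
    (fun n => (∑ b ∈ Finset.Icc 1 (n + 1), 1 / (b : ℝ) ^ 2) + 1 / ((n + 1 : ℕ) : ℝ))
    (fun n => 1 / ((n + 1 : ℕ) : ℝ) ^ 2) ?_ ?_ ?_
  · refine antitone_nat_of_succ_le fun n => ?_
    rw [Finset.sum_Icc_succ_top (by omega)]
    have hn : (0 : ℝ) ≤ n := n.cast_nonneg
    have : 1 / ((n + 1 + 1 : ℕ) : ℝ) ^ 2 + 1 / ((n + 1 + 1 : ℕ) : ℝ) ≤ 1 / ((n + 1 : ℕ) : ℝ) := by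
      push_cast
      rw [div_add_div _ _ (by positivity) (by positivity), div_le_div_iff₀ (by positivity) (by positivity)]
      nlinarith [mul_nonneg hn hn]
    linarith
  · refine monotone_nat_of_le_succ fun n => ?_
    rw [Finset.sum_Icc_succ_top (b := n + 1) (by omega)]
    have hn : (0 : ℝ) ≤ n := n.cast_nonneg
    have : 1 / ((n + 1 : ℕ) : ℝ) ≤ 1 / ((n + 1 : ℕ) : ℝ) ^ 2 + 1 / ((n + 1 + 1 : ℕ) : ℝ) := by
      push_cast
      rw [div_add_div _ _ (by positivity) (by positivity), div_le_div_iff₀ (by positivity) (by positivity)]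
      nlinarith [mul_nonneg hn hn]
    linarith
  · intro n; positivity

theorem sum_inv_sqrt_asymp : ∃ B : ℝ, ∀ Z : ℕ, 1 ≤ Z →
    0 ≤ (∑ b ∈ Finset.Icc 1 Z, 1 / √(b : ℝ)) - 2 * √(Z : ℝ) - B ∧
    (∑ b ∈ Finset.Icc 1 Z, 1 / √(b : ℝ)) - 2 * √(Z : ℝ) - B ≤ 1 / √(Z : ℝ) := by
  have aux : ∀ n : ℕ, 1 / √((n + 1 + 1 : ℕ) : ℝ) ≤
      2 * (√((n + 1 + 1 : ℕ) : ℝ) - √((n + 1 : ℕ) : ℝ)) ∧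
      2 * (√((n + 1 + 1 : ℕ) : ℝ) - √((n + 1 : ℕ) : ℝ)) ≤ 1 / √((n + 1 : ℕ) : ℝ) := by
    intro n
    have h1 : 0 < √((n + 1 : ℕ) : ℝ) := Real.sqrt_pos.2 (by positivity)
    have h2 : 0 < √((n + 1 + 1 : ℕ) : ℝ) := Real.sqrt_pos.2 (by positivity)
    have h3 : √((n + 1 : ℕ) : ℝ) ^ 2 = n + 1 := by rw [Real.sq_sqrt (by positivity)]; push_cast; ring
    have h4 : √((n + 1 + 1 : ℕ) : ℝ) ^ 2 = n + 1 + 1 := by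
      rw [Real.sq_sqrt (by positivity)]; push_cast; ring
    generalize √((n + 1 : ℕ) : ℝ) = r at *
    generalize √((n + 1 + 1 : ℕ) : ℝ) = q at *
    constructor
    · rw [div_le_iff₀ h2]
      nlinarith [sq_nonneg (q - r)]
    · rw [le_div_iff₀ h1]
      nlinarith [sq_nonneg (q - r)]
  suffices H : ∃ L : ℝ, ∀ n : ℕ, _ from by
    obtain ⟨L, hL⟩ := H
    refine ⟨L, fun Z hZ => ?_⟩
    obtain ⟨n, rfl⟩ := Nat.exists_eq_add_of_le' hZ
    exact hL n
  refine limit_squeeze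
    (fun n => (∑ b ∈ Finset.Icc 1 (n + 1), 1 / √(b : ℝ)) - 2 * √((n + 1 : ℕ) : ℝ))
    (fun n => 1 / √((n + 1 : ℕ) : ℝ)) ?_ ?_ ?_
  · refine antitone_nat_of_succ_le fun n => ?_
    rw [Finset.sum_Icc_succ_top (by omega)]
    have := (aux n).1
    linarith
  · refine monotone_nat_of_le_succ fun n => ?_
    rw [Finset.sum_Icc_succ_top (b := n + 1) (by omega)]
    have := (aux n).2
    linarith
  · intro n; positivity

theorem tau12_eq_card (n M : ℕ) (hn : n ≠ 0) (hM : n ≤ M) :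
    tau12 n = (((Finset.Icc 1 M) ×ˢ (Finset.Icc 1 M)).filter
      (fun q : ℕ × ℕ => q.1 * q.2 ^ 2 = n)).card := by
  unfold tau12
  apply Nat.subtype_card
  rintro ⟨a, b⟩
  simp only [Finset.mem_filter, Finset.mem_product, Finset.mem_Icc]
  constructor
  · rintro ⟨⟨⟨h1, _⟩, h2, _⟩, h⟩
    exact ⟨h1, h2, h⟩
  · rintro ⟨h1, h2, h⟩
    refine ⟨⟨⟨h1, ?_⟩, h2, ?_⟩, h⟩
    · exact (Nat.le_of_dvd (by omega) ⟨b ^ 2, h.symm⟩).trans hM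
    · exact (Nat.le_of_dvd (by omega) ⟨a * b, by rw [← h]; ring⟩).trans hM

theorem algebra_bound (q r : ℝ) (hr : 1 ≤ r) (hrq : r ≤ q) (hq : q ^ 2 ≤ r ^ 2 + 1) :
    (q ^ 3 / r - r ^ 2) ^ 2 ≤ 16 ∧ q ^ 6 / r ^ 4 ≤ 4 * q ^ 2 ∧ q ^ 3 / r ≤ 2 * q ^ 2 := by
  have h0 : 0 < r := by linarith
  have h1 : q ≤ 2 * r := by nlinarith
  have h1' : q ^ 2 ≤ 2 * r ^ 2 := by nlinarith
  have h2 : (q - r) * (2 * r) ≤ 1 := by nlinarith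
  have e : q ^ 3 / r - r ^ 2 = (q - r) * (q ^ 2 + q * r + r ^ 2) / r := by field_simp; ring
  refine ⟨?_, ?_, ?_⟩
  · have h3 : q ^ 3 / r - r ^ 2 ≤ 4 := by
      rw [e, div_le_iff₀ h0]
      have : (q - r) * (q ^ 2 + q * r + r ^ 2) ≤ (q - r) * (5 * r ^ 2) := by
        apply mul_le_mul_of_nonneg_left _ (by linarith)
        nlinarith
      nlinarith
    have h4 : 0 ≤ q ^ 3 / r - r ^ 2 := by
      rw [e]
      have : 0 ≤ q - r := by linarith
      have : 0 ≤ q := by linarith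
      positivity
    nlinarith
  · rw [div_le_iff₀ (by positivity)]
    have : q ^ 4 ≤ 4 * r ^ 4 := by nlinarith [sq_nonneg q]
    nlinarith [mul_le_mul_of_nonneg_left this (sq_nonneg q)]
  · rw [div_le_iff₀ h0]
    nlinarith [mul_le_mul_of_nonneg_left h1 (sq_nonneg q)]

theorem sum_tau12_eq_card (Y : ℕ) :
    ∑ m ∈ Finset.Icc 1 Y, tau12 m = (((Finset.Icc 1 Y) ×ˢ (Finset.Icc 1 Y)).filter
      (fun q : ℕ × ℕ => q.1 * q.2 ^ 2 ≤ Y)).card := by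
  rw [Finset.card_eq_sum_card_fiberwise (f := fun q : ℕ × ℕ => q.1 * q.2 ^ 2)
    (t := Finset.Icc 1 Y)]
  · refine Finset.sum_congr rfl fun m hm => ?_
    rw [Finset.mem_Icc] at hm
    rw [tau12_eq_card m Y (by omega) hm.2, Finset.filter_filter]
    congr 1
    ext ⟨a, b⟩
    simp only [Finset.mem_filter, Finset.mem_product, Finset.mem_Icc]
    constructor
    · rintro ⟨h, h'⟩
      exact ⟨h, by omega, h'⟩
    · rintro ⟨h, _, h'⟩
      exact ⟨h, h'⟩
  · rintro ⟨a, b⟩ h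
    simp only [Finset.coe_filter, Finset.mem_product, Finset.mem_Icc, Set.mem_ofPred_eq,
      Finset.coe_Icc, Set.mem_Icc] at h ⊢
    refine ⟨?_, h.2⟩
    have h1 := h.1.1.1
    have h2 := h.1.2.1
    exact Nat.mul_pos h1 (by positivity)

theorem sum_tau12_hyperbola (Y Z : ℕ) (hZ : Z ^ 3 ≤ Y) (hZ' : Y < (Z + 1) ^ 3) :
    ∑ m ∈ Finset.Icc 1 Y, tau12 m + Z ^ 2 = ∑ b ∈ Finset.Icc 1 Z, Y / b ^ 2 +
      ∑ a ∈ Finset.Icc 1 Z, Nat.sqrt (Y / a) := by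
  rw [sum_tau12_eq_card]
  have hZY : Z ≤ Y := (Nat.le_self_pow (by norm_num) Z).trans hZ
  set P := ((Finset.Icc 1 Y) ×ˢ (Finset.Icc 1 Y)).filter (fun q : ℕ × ℕ => q.1 * q.2 ^ 2 ≤ Y)
  have hP : ∀ a b, (a, b) ∈ P ↔ 1 ≤ a ∧ 1 ≤ b ∧ a * b ^ 2 ≤ Y := by
    intro a b
    simp only [P, Finset.mem_filter, Finset.mem_product, Finset.mem_Icc]
    constructor
    · rintro ⟨⟨⟨h1, _⟩, h2, _⟩, h⟩
      exact ⟨h1, h2, h⟩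
    · rintro ⟨h1, h2, h⟩
      refine ⟨⟨⟨h1, ?_⟩, h2, ?_⟩, h⟩ <;> nlinarith [Nat.mul_le_mul h1 h2, Nat.mul_le_mul h2 h2]
  have hU : P = P.filter (fun q => q.2 ≤ Z) ∪ P.filter (fun q => q.1 ≤ Z) := by
    rw [← Finset.filter_or, Finset.filter_true_of_mem]
    rintro ⟨a, b⟩ hab
    rw [hP] at hab
    by_contra! hcon
    simp only at hcon
    have : (Z + 1) * (Z + 1) ^ 2 ≤ a * b ^ 2 :=
      Nat.mul_le_mul hcon.2 (Nat.pow_le_pow_left hcon.1 2)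
    have : (Z + 1) * (Z + 1) ^ 2 = (Z + 1) ^ 3 := by ring
    omega
  have hI : P.filter (fun q => q.2 ≤ Z) ∩ P.filter (fun q => q.1 ≤ Z) =
      Finset.Icc 1 Z ×ˢ Finset.Icc 1 Z := by
    ext ⟨a, b⟩
    simp only [Finset.mem_inter, Finset.mem_filter, hP, Finset.mem_product, Finset.mem_Icc]
    constructor
    · rintro ⟨⟨⟨h1, h2, _⟩, h3⟩, _, h4⟩
      exact ⟨⟨h1, h4⟩, h2, h3⟩
    · rintro ⟨⟨h1, h4⟩, h2, h3⟩
      have : a * b ^ 2 ≤ Z * Z ^ 2 := Nat.mul_le_mul h4 (Nat.pow_le_pow_left h3 2)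
      have : Z * Z ^ 2 = Z ^ 3 := by ring
      refine ⟨⟨⟨h1, h2, by omega⟩, h3⟩, ⟨h1, h2, by omega⟩, h4⟩
  have hc := Finset.card_union_add_card_inter (P.filter (fun q => q.2 ≤ Z))
    (P.filter (fun q => q.1 ≤ Z))
  rw [← hU, hI, Finset.card_product, Nat.card_Icc] at hc
  have h1 : (P.filter (fun q => q.2 ≤ Z)).card = ∑ b ∈ Finset.Icc 1 Z, Y / b ^ 2 := by
    rw [Finset.card_eq_sum_card_fiberwise (f := fun q : ℕ × ℕ => q.2) (t := Finset.Icc 1 Z)]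
    · refine Finset.sum_congr rfl fun b hb => ?_
      rw [Finset.mem_Icc] at hb
      have : Y / b ^ 2 = (Finset.Icc 1 (Y / b ^ 2)).card := by simp
      rw [this]
      refine Finset.card_bij' (fun q _ => q.1) (fun a _ => (a, b)) ?_ ?_ ?_ ?_
      · rintro ⟨a, b'⟩ h
        simp only [Finset.mem_filter, hP, Finset.mem_Icc] at h ⊢
        obtain ⟨⟨⟨h1, h2, h3⟩, h4⟩, rfl⟩ := h
        exact ⟨h1, (Nat.le_div_iff_mul_le (by positivity)).2 h3⟩
      · intro a h
        simp only [Finset.mem_filter, hP, Finset.mem_Icc] at h ⊢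
        have hb1 := hb.1
        exact ⟨⟨⟨h.1, hb.1, (Nat.le_div_iff_mul_le (by positivity)).1 h.2⟩, hb.2⟩, trivial⟩
      · rintro ⟨a, b'⟩ h
        simp only [Finset.mem_filter] at h
        rw [← h.2]
      · intro a h
        rfl
    · rintro ⟨a, b⟩ h
      simp only [Finset.coe_filter, Set.mem_ofPred_eq, hP, Finset.coe_Icc, Set.mem_Icc] at h ⊢
      exact ⟨h.1.2.1, h.2⟩
  have h2 : (P.filter (fun q => q.1 ≤ Z)).card = ∑ a ∈ Finset.Icc 1 Z, Nat.sqrt (Y / a) := by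
    rw [Finset.card_eq_sum_card_fiberwise (f := fun q : ℕ × ℕ => q.1) (t := Finset.Icc 1 Z)]
    · refine Finset.sum_congr rfl fun a ha => ?_
      rw [Finset.mem_Icc] at ha
      have : Nat.sqrt (Y / a) = (Finset.Icc 1 (Nat.sqrt (Y / a))).card := by simp
      rw [this]
      have ha1 := ha.1
      have hiff : ∀ b, b ≤ Nat.sqrt (Y / a) ↔ a * b ^ 2 ≤ Y := by
        intro b
        rw [Nat.le_sqrt', Nat.le_div_iff_mul_le (by positivity), mul_comm]
      refine Finset.card_bij' (fun q _ => q.2) (fun b _ => (a, b)) ?_ ?_ ?_ ?_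
      · rintro ⟨a', b⟩ h
        simp only [Finset.mem_filter, hP, Finset.mem_Icc] at h ⊢
        obtain ⟨⟨⟨h1, h2, h3⟩, h4⟩, rfl⟩ := h
        exact ⟨h2, (hiff b).2 h3⟩
      · intro b h
        simp only [Finset.mem_filter, hP, Finset.mem_Icc] at h ⊢
        exact ⟨⟨⟨ha.1, h.1, (hiff b).1 h.2⟩, ha.2⟩, trivial⟩
      · rintro ⟨a', b⟩ h
        simp only [Finset.mem_filter] at h
        rw [← h.2]
      · intro a h
        rfl
    · rintro ⟨a, b⟩ h
      simp only [Finset.coe_filter, Set.mem_ofPred_eq, hP, Finset.coe_Icc, Set.mem_Icc] at h ⊢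
      exact ⟨h.1.1, h.2⟩
  rw [← h1, ← h2, ← hc]
  simp only [Nat.add_sub_cancel]
  ring

theorem T_asymp : ∃ A B K : ℝ, 0 ≤ K ∧ ∀ y : ℝ, 0 < y →
    |(∑ m ∈ Finset.Icc 1 ⌊y⌋₊, (tau12 m : ℝ)) - A * y - B * y ^ ((1 : ℝ) / 2)| ≤
      K * y ^ ((1 : ℝ) / 3) := by
  obtain ⟨A, hA⟩ := sum_inv_sq_asymp
  obtain ⟨B, hB⟩ := sum_inv_sqrt_asymp
  refine ⟨A, B, 24 + |A| + |B|, by positivity, fun y hy => ?_⟩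
  rcases lt_or_ge y 1 with hy1 | hy1
  · have h0 : ⌊y⌋₊ = 0 := Nat.floor_eq_zero.2 hy1
    rw [h0]
    have e1 : y ≤ y ^ ((1 : ℝ) / 3) := by
      conv_lhs => rw [← Real.rpow_one y]
      exact Real.rpow_le_rpow_of_exponent_ge hy hy1.le (by norm_num)
    have e2 : y ^ ((1 : ℝ) / 2) ≤ y ^ ((1 : ℝ) / 3) :=
      Real.rpow_le_rpow_of_exponent_ge hy hy1.le (by norm_num)
    have p1 : 0 ≤ y ^ ((1 : ℝ) / 2) := by positivity
    generalize y ^ ((1 : ℝ) / 3) = u at *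
    generalize y ^ ((1 : ℝ) / 2) = v at *
    have : |A * y| ≤ |A| * u := by
      rw [abs_mul, abs_of_pos hy]; gcongr
    have : |B * v| ≤ |B| * u := by
      rw [abs_mul, abs_of_nonneg p1]; gcongr
    simp only [Finset.Icc_eq_empty_of_lt (by norm_num : (0 : ℕ) < 1), Finset.sum_empty]
    rw [abs_le] at *
    constructor <;> nlinarith
  · set w := y ^ ((1 : ℝ) / 3) with hw
    have hw3 : w ^ 3 = y := by
      rw [hw, ← Real.rpow_natCast, ← Real.rpow_mul hy.le]; norm_num
    have hw1 : 1 ≤ w := Real.one_le_rpow hy1 (by norm_num)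
    set Z := ⌊w⌋₊ with hZ
    have hZ1 : 1 ≤ Z := Nat.le_floor (by simpa using hw1)
    have hZw : (Z : ℝ) ≤ w := Nat.floor_le (by linarith)
    have hwZ : w < Z + 1 := Nat.lt_floor_add_one w
    set Y := ⌊y⌋₊ with hY
    have hYy : (Y : ℝ) ≤ y := Nat.floor_le hy.le
    have hyY : y < Y + 1 := Nat.lt_floor_add_one y
    have hZR1 : (1 : ℝ) ≤ Z := by exact_mod_cast hZ1
    have hZ3 : Z ^ 3 ≤ Y := by
      apply Nat.le_floor
      push_cast
      rw [← hw3]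
      gcongr
    have hZ3' : Y < (Z + 1) ^ 3 := by
      rw [hY, Nat.floor_lt hy.le]
      push_cast
      rw [← hw3]
      gcongr
    have hyp := sum_tau12_hyperbola Y Z hZ3 hZ3'
    have hypR : (∑ m ∈ Finset.Icc 1 Y, (tau12 m : ℝ)) + (Z : ℝ) ^ 2 =
        ∑ b ∈ Finset.Icc 1 Z, ((Y / b ^ 2 : ℕ) : ℝ) +
        ∑ a ∈ Finset.Icc 1 Z, ((Nat.sqrt (Y / a) : ℕ) : ℝ) := by exact_mod_cast hyp
    have hq2 : √w ^ 2 = w := Real.sq_sqrt (by linarith)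
    have hr2 : √(Z : ℝ) ^ 2 = Z := Real.sq_sqrt (by linarith)
    have hr1 : 1 ≤ √(Z : ℝ) := Real.one_le_sqrt.2 hZR1
    have hrq : √(Z : ℝ) ≤ √w := Real.sqrt_le_sqrt hZw
    have hq6 : √w ^ 6 = y := by
      rw [← hw3]
      calc √w ^ 6 = (√w ^ 2) ^ 3 := by ring
        _ = w ^ 3 := by rw [hq2]
    have hq3 : y ^ ((1 : ℝ) / 2) = √w ^ 3 := by
      rw [← Real.sqrt_eq_rpow, ← hq6, Real.sqrt_eq_iff_mul_self_eq (by positivity) (by positivity)]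
      ring
    -- first sum
    have s1 : ∀ b ∈ Finset.Icc 1 Z, y * (1 / (b : ℝ) ^ 2) - 1 ≤ ((Y / b ^ 2 : ℕ) : ℝ) ∧
        ((Y / b ^ 2 : ℕ) : ℝ) ≤ y * (1 / (b : ℝ) ^ 2) := by
      intro b hb
      have e : Y / b ^ 2 = ⌊y / ((b ^ 2 : ℕ) : ℝ)⌋₊ := by rw [Nat.floor_div_natCast]
      have e2 : y * (1 / (b : ℝ) ^ 2) = y / ((b ^ 2 : ℕ) : ℝ) := by push_cast; ring
      rw [e, e2]
      constructor
      · have := Nat.lt_floor_add_one (y / ((b ^ 2 : ℕ) : ℝ))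
        linarith
      · exact Nat.floor_le (by positivity)
    have s2 : ∀ a ∈ Finset.Icc 1 Z, √w ^ 3 * (1 / √(a : ℝ)) - 1 ≤ ((Nat.sqrt (Y / a) : ℕ) : ℝ) ∧
        ((Nat.sqrt (Y / a) : ℕ) : ℝ) ≤ √w ^ 3 * (1 / √(a : ℝ)) := by
      intro a ha
      have ha1 : 1 ≤ a := (Finset.mem_Icc.1 ha).1
      have haR : (0 : ℝ) < a := by exact_mod_cast ha1
      have e2 : √w ^ 3 * (1 / √(a : ℝ)) = √(y / a) := by
        rw [← hq3, ← Real.sqrt_eq_rpow, Real.sqrt_div hy.le]; ring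
      rw [e2]
      set s := Nat.sqrt (Y / a) with hs
      have b1 : a * s ^ 2 ≤ Y := by
        have := Nat.sqrt_le' (Y / a)
        calc a * s ^ 2 ≤ a * (Y / a) := Nat.mul_le_mul_left _ this
          _ ≤ Y := Nat.mul_div_le _ _
      have b2 : Y < a * (s + 1) ^ 2 := by
        have := Nat.lt_succ_sqrt' (Y / a)
        rw [Nat.div_lt_iff_lt_mul ha1] at this
        rw [mul_comm]
        exact this
      have b1R : (a : ℝ) * s ^ 2 ≤ Y := by exact_mod_cast b1
      have b2R : (Y : ℝ) + 1 ≤ a * (s + 1) ^ 2 := by exact_mod_cast b2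
      constructor
      · rw [sub_le_iff_le_add, Real.sqrt_le_left (by positivity), div_le_iff₀ haR]
        linarith
      · apply Real.le_sqrt_of_sq_le
        rw [le_div_iff₀ haR]
        linarith
    have c1 := Finset.sum_le_sum (fun b hb => (s1 b hb).1)
    have c2 := Finset.sum_le_sum (fun b hb => (s1 b hb).2)
    have c3 := Finset.sum_le_sum (fun b hb => (s2 b hb).1)
    have c4 := Finset.sum_le_sum (fun b hb => (s2 b hb).2)
    rw [Finset.sum_sub_distrib, ← Finset.mul_sum] at c1 c3
    rw [← Finset.mul_sum] at c2 c4
    simp only [Finset.sum_const, Nat.card_Icc, Nat.add_sub_cancel, nsmul_eq_mul, mul_one] at c1 c3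
    obtain ⟨d1, d2⟩ := hA Z hZ1
    obtain ⟨d3, d4⟩ := hB Z hZ1
    obtain ⟨k1, k2, k3⟩ := algebra_bound (√w) (√(Z : ℝ)) hr1 hrq (by rw [hq2, hr2]; linarith)
    rw [hq3]
    set S2 := ∑ b ∈ Finset.Icc 1 Z, 1 / (b : ℝ) ^ 2
    set S1 := ∑ b ∈ Finset.Icc 1 Z, 1 / √(b : ℝ)
    set q := √w
    set r := √(Z : ℝ)
    have hr0 : 0 < r := by linarith
    have hq0 : 0 < q := by linarith
    have ex : (q ^ 3 / r - r ^ 2) ^ 2 = y * (1 / Z) - 2 * (q ^ 3 * r) + Z ^ 2 := by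
      rw [← hr2, ← hq6]; field_simp; ring
    have f1 : 0 ≤ y * (S2 + 1 / Z - A) := mul_nonneg hy.le d1
    have f2 : y * (S2 + 1 / Z - A) ≤ 4 * w := by
      calc y * (S2 + 1 / Z - A) ≤ y * (1 / (Z : ℝ) ^ 2) := by gcongr
        _ = q ^ 6 / r ^ 4 := by rw [← hr2, ← hq6]; ring
        _ ≤ 4 * w := by rw [← hq2]; exact k2
    have f3 : 0 ≤ q ^ 3 * (S1 - 2 * r - B) := mul_nonneg (by positivity) d3
    have f4 : q ^ 3 * (S1 - 2 * r - B) ≤ 2 * w := by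
      calc q ^ 3 * (S1 - 2 * r - B) ≤ q ^ 3 * (1 / r) := by gcongr
        _ = q ^ 3 / r := by ring
        _ ≤ 2 * w := by rw [← hq2]; exact k3
    have f5 : 0 ≤ (q ^ 3 / r - r ^ 2) ^ 2 := sq_nonneg _
    have f6 : 0 ≤ (|A| + |B|) * w := by positivity
    have g1 : (q ^ 3 / r - r ^ 2) ^ 2 ≤ 16 * w := by linarith
    rw [ex] at f5 g1
    clear k1 k2 k3 s1 s2 hyp
    rw [abs_le]
    constructor <;> linarith

theorem tau12_eq_prod (n : ℕ) (hn : n ≠ 0) (S : Finset ℕ) (hS : n.primeFactors ⊆ S) :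
    tau12 n = ∏ p : S, (n.factorization p / 2 + 1) := by
  obtain ⟨a, r, hra, ha⟩ := Nat.sq_mul_squarefree n
  have ha0 : a ≠ 0 := by rintro rfl; simp at hra; exact hn hra.symm
  have hr0 : r ≠ 0 := by rintro rfl; simp at hra; exact hn hra.symm
  have hv : ∀ p, n.factorization p / 2 = r.factorization p := by
    intro p
    rw [← hra, Nat.factorization_mul (by positivity) ha0, Nat.factorization_pow]
    have := ha.natFactorization_le_one p
    simp only [Finsupp.add_apply, Finsupp.smul_apply, smul_eq_mul]
    omega
  have hdv : ∀ b, b ≠ 0 → (b ^ 2 ∣ n ↔ b ∣ r) := by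
    intro b hb
    rw [← Nat.factorization_le_iff_dvd (by positivity) hn, ← Nat.factorization_le_iff_dvd hb hr0,
      Finsupp.le_def, Finsupp.le_def]
    refine forall_congr' fun p => ?_
    rw [← hv p, Nat.factorization_pow]
    simp only [Finsupp.smul_apply, smul_eq_mul]
    omega
  have hcard : tau12 n = r.divisors.card := by
    rw [tau12_eq_card n n hn le_rfl]
    refine Finset.card_bij' (fun q _ => q.2) (fun b _ => (n / b ^ 2, b)) ?_ ?_ ?_ ?_
    · rintro ⟨x, b⟩ h
      simp only [Finset.mem_filter, Finset.mem_product, Finset.mem_Icc, Nat.mem_divisors] at h ⊢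
      exact ⟨(hdv b (by omega)).1 ⟨x, by rw [← h.2]; ring⟩, hr0⟩
    · intro b h
      simp only [Finset.mem_filter, Finset.mem_product, Finset.mem_Icc, Nat.mem_divisors] at h ⊢
      have hb : b ≠ 0 := by rintro rfl; simp at h
      have hd := (hdv b hb).2 h.1
      have hle : b ^ 2 ≤ n := Nat.le_of_dvd (by omega) hd
      refine ⟨⟨⟨Nat.div_pos hle (by positivity), Nat.div_le_self _ _⟩, by omega, ?_⟩,
        Nat.div_mul_cancel hd⟩
      nlinarith [Nat.pos_of_ne_zero hb]
    · rintro ⟨x, b⟩ h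
      simp only [Finset.mem_filter, Finset.mem_product, Finset.mem_Icc] at h ⊢
      have hb : 0 < b ^ 2 := by have := h.1.2.1; positivity
      rw [← h.2, Nat.mul_div_cancel _ hb]
    · intro b h
      rfl
  rw [hcard, Nat.card_divisors hr0, Finset.prod_coe_sort S (fun p => n.factorization p / 2 + 1)]
  simp only [hv]
  apply Finset.prod_subset
  · exact (Nat.primeFactors_mono ⟨r * a, by rw [← hra]; ring⟩ hn).trans hS
  · intro p _ hp
    rw [← Nat.support_factorization, Finsupp.notMem_support_iff] at hp
    simp [hp]

/-- Local factor. -/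
def tloc (v e : ℕ) : ℝ := if e ≤ v then (((v - e) / 2 + 1 : ℕ) : ℝ) else 0

/-- Exponents in the first variable. -/
def expo1 : Fin 4 → ℕ := ![0, 1, 2, 1]
/-- Exponents in the second variable. -/
def expo2 : Fin 4 → ℕ := ![0, 1, 1, 2]
/-- Signs. -/
def esgn : Fin 4 → ℝ := ![1, 1, -1, -1]

theorem tloc_identity (a b : ℕ) : (((a + b) / 2 + 1 : ℕ) : ℝ) =
    ∑ c : Fin 4, esgn c * (tloc a (expo1 c) * tloc b (expo2 c)) := by
  have h2 : ∀ k : ℕ, (2 * k) / 2 = k := by intro k; omega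
  have h2' : ∀ k : ℕ, (2 * k + 1) / 2 = k := by intro k; omega
  have t0 : ∀ v, tloc v 0 = ((v / 2 + 1 : ℕ) : ℝ) := by intro v; simp [tloc]
  have t1e : ∀ k, tloc (2 * k) 1 = k := by
    intro k
    rcases k with _ | k
    · simp [tloc]
    · rw [tloc, if_pos (by omega), show (2 * (k + 1) - 1) / 2 + 1 = k + 1 by omega]
  have t1o : ∀ k, tloc (2 * k + 1) 1 = k + 1 := by
    intro k
    rw [tloc, if_pos (by omega), show (2 * k + 1 - 1) / 2 + 1 = k + 1 by omega]; push_cast; ring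
  have t2e : ∀ k, tloc (2 * k) 2 = k := by
    intro k
    rcases k with _ | k
    · simp [tloc]
    · rw [tloc, if_pos (by omega), show (2 * (k + 1) - 2) / 2 + 1 = k + 1 by omega]
  have t2o : ∀ k, tloc (2 * k + 1) 2 = k := by
    intro k
    rcases k with _ | k
    · simp [tloc]
    · rw [tloc, if_pos (by omega), show (2 * (k + 1) + 1 - 2) / 2 + 1 = k + 1 by omega]
  rw [Fin.sum_univ_four]
  simp only [esgn, expo1, expo2, Matrix.cons_val]
  rcases Nat.even_or_odd' a with ⟨k, rfl | rfl⟩ <;> rcases Nat.even_or_odd' b with ⟨l, rfl | rfl⟩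
  · rw [show (2 * k + 2 * l) / 2 = k + l by omega, t0, t0, h2, h2, t1e, t1e, t2e, t2e]
    push_cast; ring
  · rw [show (2 * k + (2 * l + 1)) / 2 = k + l by omega, t0, t0, h2, h2', t1e, t1o, t2e, t2o]
    push_cast; ring
  · rw [show (2 * k + 1 + 2 * l) / 2 = k + l by omega, t0, t0, h2, h2', t1e, t1o, t2e, t2o]
    push_cast; ring
  · rw [show (2 * k + 1 + (2 * l + 1)) / 2 = k + l + 1 by omega, t0, t0, h2', h2', t1o, t1o, t2o, t2o]
    push_cast; ring

theorem factorization_prod_pow (S : Finset ℕ) (hS : ∀ p ∈ S, p.Prime) (e : S → ℕ) (q : S) :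
    (∏ p : S, (p : ℕ) ^ e p).factorization q = e q := by
  rw [Nat.factorization_prod (fun (p : S) _ => pow_ne_zero _ (hS p p.2).ne_zero), Finsupp.finset_sum_apply]
  rw [Finset.sum_eq_single q]
  · rw [(hS q q.2).factorization_pow]; simp
  · intro p _ hpq
    rw [(hS p p.2).factorization_pow, Finsupp.single_apply, if_neg]
    exact fun h => hpq (Subtype.ext h)
  · simp

theorem factorization_prod_pow_notMem (S : Finset ℕ) (hS : ∀ p ∈ S, p.Prime) (e : S → ℕ) (q : ℕ)
    (hq : q ∉ S) : (∏ p : S, (p : ℕ) ^ e p).factorization q = 0 := by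
  rw [Nat.factorization_prod (fun (p : S) _ => pow_ne_zero _ (hS p p.2).ne_zero), Finsupp.finset_sum_apply]
  apply Finset.sum_eq_zero
  intro p _
  rw [(hS p p.2).factorization_pow, Finsupp.single_apply, if_neg]
  exact fun h => hq (h ▸ p.2)

theorem prod_tloc (S : Finset ℕ) (hS : ∀ p ∈ S, p.Prime) (e : S → ℕ) (m : ℕ) (hm : m ≠ 0)
    (hmS : m.primeFactors ⊆ S) :
    ∏ p : S, tloc (m.factorization p) (e p) =
      if (∏ p : S, (p : ℕ) ^ e p) ∣ m then (tau12 (m / ∏ p : S, (p : ℕ) ^ e p) : ℝ) else 0 := by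
  set i := ∏ p : S, (p : ℕ) ^ e p with hi
  have hi0 : i ≠ 0 := Finset.prod_ne_zero_iff.2 fun p _ => pow_ne_zero _ (hS p p.2).ne_zero
  split_ifs with h
  · have hle := (Nat.factorization_le_iff_dvd hi0 hm).2 h
    have hq0 : m / i ≠ 0 := (Nat.div_pos (Nat.le_of_dvd (Nat.pos_of_ne_zero hm) h) (Nat.pos_of_ne_zero hi0)).ne'
    rw [tau12_eq_prod (m / i) hq0 S ((Nat.primeFactors_mono (Nat.div_dvd_of_dvd h) hm).trans hmS)]
    rw [Nat.cast_prod]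
    refine Finset.prod_congr rfl fun p _ => ?_
    have h1 := hle p
    rw [factorization_prod_pow S hS e p] at h1
    rw [tloc, if_pos h1, Nat.factorization_div h, Finsupp.tsub_apply, factorization_prod_pow S hS e p]
  · have : ∃ p : S, ¬ e p ≤ m.factorization p := by
      by_contra! hcon
      apply h
      rw [← Nat.factorization_le_iff_dvd hi0 hm, Finsupp.le_def]
      intro q
      by_cases hq : q ∈ S
      · have := hcon ⟨q, hq⟩
        rw [← factorization_prod_pow S hS e ⟨q, hq⟩] at this
        exact this
      · rw [factorization_prod_pow_notMem S hS e q hq]; exact Nat.zero_le _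
    obtain ⟨p, hp⟩ := this
    exact Finset.prod_eq_zero (Finset.mem_univ p) (by rw [tloc, if_neg hp])

theorem tau12_mul_eq (S : Finset ℕ) (hS : ∀ p ∈ S, p.Prime) (m n : ℕ) (hm : m ≠ 0) (hn : n ≠ 0)
    (hmS : m.primeFactors ⊆ S) (hnS : n.primeFactors ⊆ S) :
    (tau12 (m * n) : ℝ) = ∑ φ : S → Fin 4, (∏ p, esgn (φ p)) *
      ((if (∏ p : S, (p : ℕ) ^ expo1 (φ p)) ∣ m then
        (tau12 (m / ∏ p : S, (p : ℕ) ^ expo1 (φ p)) : ℝ) else 0) *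
      (if (∏ p : S, (p : ℕ) ^ expo2 (φ p)) ∣ n then
        (tau12 (n / ∏ p : S, (p : ℕ) ^ expo2 (φ p)) : ℝ) else 0)) := by
  rw [tau12_eq_prod (m * n) (mul_ne_zero hm hn) S
    (by rw [Nat.primeFactors_mul hm hn]; exact Finset.union_subset hmS hnS)]
  rw [Nat.cast_prod, Nat.factorization_mul hm hn]
  simp only [Finsupp.add_apply]
  simp_rw [tloc_identity]
  rw [Fintype.prod_sum]
  refine Finset.sum_congr rfl fun φ _ => ?_
  rw [Finset.prod_mul_distrib, Finset.prod_mul_distrib,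
    prod_tloc S hS (fun p => expo1 (φ p)) m hm hmS, prod_tloc S hS (fun p => expo2 (φ p)) n hn hnS]

/-- Summatory function. -/
noncomputable def Tsum (y : ℝ) : ℝ := ∑ m ∈ Finset.Icc 1 ⌊y⌋₊, (tau12 m : ℝ)

theorem sum_dvd_tau12 (x : ℝ) (i : ℕ) (hi : i ≠ 0) :
    (∑ m ∈ Finset.Icc 1 ⌊x⌋₊, if i ∣ m then (tau12 (m / i) : ℝ) else 0) = Tsum (x / i) := by
  rw [Tsum, Nat.floor_div_natCast, ← Finset.sum_filter]
  have hi' := Nat.pos_of_ne_zero hi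
  refine Finset.sum_bij' (fun m _ => m / i) (fun k _ => k * i) ?_ ?_ ?_ ?_ ?_
  · intro m h
    simp only [Finset.mem_filter, Finset.mem_Icc] at h ⊢
    exact ⟨Nat.div_pos (Nat.le_of_dvd (by omega) h.2) hi', Nat.div_le_div_right h.1.2⟩
  · intro k h
    simp only [Finset.mem_filter, Finset.mem_Icc] at h ⊢
    exact ⟨⟨Nat.mul_pos h.1 hi', (Nat.le_div_iff_mul_le hi').1 h.2⟩, Dvd.intro_left _ rfl⟩
  · intro m h
    simp only [Finset.mem_filter] at h
    exact Nat.div_mul_cancel h.2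
  · intro k h
    exact Nat.mul_div_cancel _ hi'
  · intro m h
    rfl

theorem double_sum_eq (S : Finset ℕ) (hS : ∀ p ∈ S, p.Prime) (x : ℝ)
    (hSx : ∀ p : ℕ, p.Prime → p ≤ ⌊x⌋₊ → p ∈ S) :
    (∑ m ∈ Finset.Icc 1 ⌊x⌋₊, ∑ n ∈ Finset.Icc 1 ⌊x⌋₊, (tau12 (m * n) : ℝ)) =
      ∑ φ : S → Fin 4, (∏ p, esgn (φ p)) *
        (Tsum (x / (∏ p : S, (p : ℕ) ^ expo1 (φ p) : ℕ)) *
          Tsum (x / (∏ p : S, (p : ℕ) ^ expo2 (φ p) : ℕ))) := by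
  have hsub : ∀ m ∈ Finset.Icc 1 ⌊x⌋₊, m ≠ 0 ∧ m.primeFactors ⊆ S := by
    intro m hm
    rw [Finset.mem_Icc] at hm
    refine ⟨by omega, fun p hp => ?_⟩
    exact hSx p (Nat.prime_of_mem_primeFactors hp) ((Nat.le_of_mem_primeFactors hp).trans hm.2)
  have h1 : ∀ m ∈ Finset.Icc 1 ⌊x⌋₊, ∀ n ∈ Finset.Icc 1 ⌊x⌋₊, _ := fun m hm n hn =>
    tau12_mul_eq S hS m n (hsub m hm).1 (hsub n hn).1 (hsub m hm).2 (hsub n hn).2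
  rw [Finset.sum_congr rfl fun m hm => Finset.sum_congr rfl fun n hn => h1 m hm n hn]
  rw [Finset.sum_congr rfl fun m hm => Finset.sum_comm, Finset.sum_comm]
  refine Finset.sum_congr rfl fun φ _ => ?_
  simp_rw [← Finset.mul_sum, ← Finset.sum_mul]
  rw [sum_dvd_tau12, sum_dvd_tau12]
  all_goals exact Finset.prod_ne_zero_iff.2 fun p _ => pow_ne_zero _ (hS p p.2).ne_zero

/-- Local Euler factor. -/
noncomputable def locF (s : Fin 4 → ℝ) (σ τ : ℝ) (p : ℕ) : ℝ :=
  ∑ c : Fin 4, s c * ((((p ^ expo1 c : ℕ) : ℝ)) ^ (-σ) * (((p ^ expo2 c : ℕ) : ℝ)) ^ (-τ))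

theorem weight_sum (S : Finset ℕ) (s : Fin 4 → ℝ) (σ τ : ℝ) :
    ∑ φ : S → Fin 4, (∏ p, s (φ p)) *
      (((∏ p : S, (p : ℕ) ^ expo1 (φ p) : ℕ) : ℝ) ^ (-σ) *
        ((∏ p : S, (p : ℕ) ^ expo2 (φ p) : ℕ) : ℝ) ^ (-τ)) = ∏ p ∈ S, locF s σ τ p := by
  rw [← Finset.prod_coe_sort S (fun p => locF s σ τ p)]
  simp only [locF]
  rw [Fintype.prod_sum]
  refine Finset.sum_congr rfl fun φ _ => ?_
  rw [Finset.prod_mul_distrib, Finset.prod_mul_distrib, Nat.cast_prod, Nat.cast_prod,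
    Real.finset_prod_rpow _ _ (fun p _ => Nat.cast_nonneg _),
    Real.finset_prod_rpow _ _ (fun p _ => Nat.cast_nonneg _)]

theorem locF_bound (s : Fin 4 → ℝ) (hs0 : s 0 = 1) (hs : ∀ c, |s c| ≤ 1) (σ τ : ℝ) (hσ : 0 ≤ σ)
    (hτ : 0 ≤ τ) (hst : 4 / 3 ≤ σ + τ) (p : ℕ) (hp : 1 ≤ p) :
    |locF s σ τ p - 1| ≤ 3 * (1 / (p : ℝ) ^ ((4 : ℝ) / 3)) := by
  have hpR : (1 : ℝ) ≤ p := by exact_mod_cast hp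
  have hp0 : (0 : ℝ) < p := by linarith
  have hterm : ∀ c : Fin 4, 1 ≤ expo1 c → 1 ≤ expo2 c →
      |s c * ((((p ^ expo1 c : ℕ) : ℝ)) ^ (-σ) * (((p ^ expo2 c : ℕ) : ℝ)) ^ (-τ))| ≤
        1 / (p : ℝ) ^ ((4 : ℝ) / 3) := by
    intro c h1 h2
    have h1R : (1 : ℝ) ≤ expo1 c := by exact_mod_cast h1
    have h2R : (1 : ℝ) ≤ expo2 c := by exact_mod_cast h2
    have hnn : 0 ≤ (((p ^ expo1 c : ℕ) : ℝ)) ^ (-σ) * (((p ^ expo2 c : ℕ) : ℝ)) ^ (-τ) := by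
      positivity
    rw [abs_mul, abs_of_nonneg hnn]
    calc |s c| * ((((p ^ expo1 c : ℕ) : ℝ)) ^ (-σ) * (((p ^ expo2 c : ℕ) : ℝ)) ^ (-τ))
        ≤ 1 * ((((p ^ expo1 c : ℕ) : ℝ)) ^ (-σ) * (((p ^ expo2 c : ℕ) : ℝ)) ^ (-τ)) :=
          mul_le_mul_of_nonneg_right (hs c) hnn
      _ = (p : ℝ) ^ ((expo1 c : ℝ) * (-σ) + (expo2 c : ℝ) * (-τ)) := by
          rw [one_mul, Real.rpow_add hp0, Real.rpow_mul hp0.le, Real.rpow_mul hp0.le,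
            Real.rpow_natCast, Real.rpow_natCast]
          push_cast
          rfl
      _ ≤ (p : ℝ) ^ (-((4 : ℝ) / 3)) := by
          apply Real.rpow_le_rpow_of_exponent_le hpR
          nlinarith
      _ = 1 / (p : ℝ) ^ ((4 : ℝ) / 3) := by rw [Real.rpow_neg hp0.le]; ring
  have e0 : locF s σ τ p - 1 =
      s 1 * ((((p ^ expo1 1 : ℕ) : ℝ)) ^ (-σ) * (((p ^ expo2 1 : ℕ) : ℝ)) ^ (-τ)) +
      s 2 * ((((p ^ expo1 2 : ℕ) : ℝ)) ^ (-σ) * (((p ^ expo2 2 : ℕ) : ℝ)) ^ (-τ)) +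
      s 3 * ((((p ^ expo1 3 : ℕ) : ℝ)) ^ (-σ) * (((p ^ expo2 3 : ℕ) : ℝ)) ^ (-τ)) := by
    have a1 : expo1 0 = 0 := rfl
    have a2 : expo2 0 = 0 := rfl
    rw [locF, Fin.sum_univ_four, hs0, a1, a2]
    simp only [pow_zero, Nat.cast_one, Real.one_rpow]
    ring
  rw [e0]
  have b1 := hterm 1 (by decide) (by decide)
  have b2 := hterm 2 (by decide) (by decide)
  have b3 := hterm 3 (by decide) (by decide)
  refine (abs_add_three _ _ _).trans ?_
  linarith

theorem locF_tendsto (s : Fin 4 → ℝ) (hs0 : s 0 = 1) (hs : ∀ c, |s c| ≤ 1) (σ τ : ℝ) (hσ : 0 ≤ σ)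
    (hτ : 0 ≤ τ) (hst : 4 / 3 ≤ σ + τ) :
    ∃ L : ℝ, Tendsto (fun y : ℕ => ∏ p ∈ Nat.primesBelow y, locF s σ τ p) atTop (nhds L) := by
  set g : ℕ → ℝ := fun p => if p.Prime then locF s σ τ p - 1 else 0 with hg
  have hsum : Summable g := by
    refine Summable.of_norm_bounded (g := fun p : ℕ => 3 * (1 / (p : ℝ) ^ ((4 : ℝ) / 3)))
      ((Real.summable_one_div_nat_rpow.2 (by norm_num)).mul_left 3) fun p => ?_
    simp only [hg]
    split_ifs with hp
    · exact locF_bound s hs0 hs σ τ hσ hτ hst p hp.one_le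
    · rw [norm_zero]; positivity
  have hm := (Real.multipliable_one_add_of_summable hsum).hasProd.tendsto_prod_nat
  refine ⟨_, hm.congr fun y => ?_⟩
  rw [Nat.primesBelow, Finset.prod_filter]
  refine Finset.prod_congr rfl fun p _ => ?_
  simp only [hg]
  split_ifs <;> ring

theorem Tsum_mul_asymp : ∃ A B K : ℝ, 0 ≤ K ∧ ∀ y z : ℝ, 0 < y → 0 < z →
    |Tsum y * Tsum z - A ^ 2 * (y * z) -
      A * B * (y * z ^ ((1 : ℝ) / 2) + y ^ ((1 : ℝ) / 2) * z)| ≤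
      K * (y * z ^ ((1 : ℝ) / 3) + y ^ ((1 : ℝ) / 3) * z +
        y ^ ((2 : ℝ) / 3) * z ^ ((2 : ℝ) / 3)) := by
  obtain ⟨A, B, K, hK, h⟩ := T_asymp
  have hR : ∀ y : ℝ, 0 < y → |Tsum y - A * y| ≤ (|A| + |B| + K) * y ^ ((2 : ℝ) / 3) := by
    intro y hy
    have p0 : 0 < y ^ ((2 : ℝ) / 3) := by positivity
    rcases lt_or_ge y 1 with hy1 | hy1
    · have h0 : ⌊y⌋₊ = 0 := Nat.floor_eq_zero.2 hy1
      have e1 : y ≤ y ^ ((2 : ℝ) / 3) := by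
        conv_lhs => rw [← Real.rpow_one y]
        exact Real.rpow_le_rpow_of_exponent_ge hy hy1.le (by norm_num)
      rw [Tsum, h0]
      simp only [Finset.Icc_eq_empty_of_lt (by norm_num : (0 : ℕ) < 1), Finset.sum_empty]
      rw [zero_sub, abs_neg, abs_mul, abs_of_pos hy]
      have : |A| * y ≤ |A| * y ^ ((2 : ℝ) / 3) := by gcongr
      have : 0 ≤ (|B| + K) * y ^ ((2 : ℝ) / 3) := by positivity
      linarith
    · have e1 : y ^ ((1 : ℝ) / 2) ≤ y ^ ((2 : ℝ) / 3) :=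
        Real.rpow_le_rpow_of_exponent_le hy1 (by norm_num)
      have e2 : y ^ ((1 : ℝ) / 3) ≤ y ^ ((2 : ℝ) / 3) :=
        Real.rpow_le_rpow_of_exponent_le hy1 (by norm_num)
      have h3 := h y hy
      have h4 : |B * y ^ ((1 : ℝ) / 2)| ≤ |B| * y ^ ((2 : ℝ) / 3) := by
        rw [abs_mul, abs_of_pos (by positivity : 0 < y ^ ((1 : ℝ) / 2))]; gcongr
      have h5 : K * y ^ ((1 : ℝ) / 3) ≤ K * y ^ ((2 : ℝ) / 3) := by gcongr
      have h6 : 0 ≤ |A| * y ^ ((2 : ℝ) / 3) := by positivity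
      have h7 : Tsum y - A * y = ((∑ m ∈ Finset.Icc 1 ⌊y⌋₊, (tau12 m : ℝ)) - A * y -
        B * y ^ ((1 : ℝ) / 2)) + B * y ^ ((1 : ℝ) / 2) := by rw [Tsum]; ring
      rw [h7]
      refine (abs_add_le _ _).trans ?_
      linarith
  refine ⟨A, B, |A| * K + (|A| + |B| + K) ^ 2, by positivity, fun y z hy hz => ?_⟩
  have hE : ∀ y : ℝ, 0 < y → |Tsum y - A * y - B * y ^ ((1 : ℝ) / 2)| ≤ K * y ^ ((1 : ℝ) / 3) := h
  have ey := hE y hy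
  have ez := hE z hz
  have ry := hR y hy
  have rz := hR z hz
  have p1 : 0 < y ^ ((1 : ℝ) / 3) := by positivity
  have p2 : 0 < z ^ ((1 : ℝ) / 3) := by positivity
  have p3 : 0 < y ^ ((2 : ℝ) / 3) := by positivity
  have p4 : 0 < z ^ ((2 : ℝ) / 3) := by positivity
  have e : Tsum y * Tsum z - A ^ 2 * (y * z) -
      A * B * (y * z ^ ((1 : ℝ) / 2) + y ^ ((1 : ℝ) / 2) * z) =
      A * y * (Tsum z - A * z - B * z ^ ((1 : ℝ) / 2)) +
      A * z * (Tsum y - A * y - B * y ^ ((1 : ℝ) / 2)) +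
      (Tsum y - A * y) * (Tsum z - A * z) := by ring
  rw [e]
  refine (abs_add_three _ _ _).trans ?_
  simp only [abs_mul, abs_of_pos hy, abs_of_pos hz]
  have f1 : |A| * y * |Tsum z - A * z - B * z ^ ((1 : ℝ) / 2)| ≤
    |A| * y * (K * z ^ ((1 : ℝ) / 3)) := by gcongr
  have f2 : |A| * z * |Tsum y - A * y - B * y ^ ((1 : ℝ) / 2)| ≤
    |A| * z * (K * y ^ ((1 : ℝ) / 3)) := by gcongr
  have f3 : |Tsum y - A * y| * |Tsum z - A * z| ≤
    ((|A| + |B| + K) * y ^ ((2 : ℝ) / 3)) * ((|A| + |B| + K) * z ^ ((2 : ℝ) / 3)) := by gcongr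
  have g1 : 0 ≤ (|A| + |B| + K) ^ 2 * (y * z ^ ((1 : ℝ) / 3) + y ^ ((1 : ℝ) / 3) * z) := by
    positivity
  have g2 : 0 ≤ |A| * K * (y ^ ((2 : ℝ) / 3) * z ^ ((2 : ℝ) / 3)) := by positivity
  generalize |A| + |B| + K = M at *
  linarith

theorem esgn_zero : esgn 0 = 1 := rfl

theorem abs_esgn (c : Fin 4) : |esgn c| = 1 := by
  fin_cases c <;> simp [esgn]

theorem main_bound : ∃ C₁ C₂ K : ℝ, ∀ x : ℝ, 0 < x →
    |(∑ m ∈ Finset.Icc 1 ⌊x⌋₊, ∑ n ∈ Finset.Icc 1 ⌊x⌋₊, (tau12 (m * n) : ℝ)) -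
      C₁ * x ^ 2 - C₂ * x ^ ((3 : ℝ) / 2)| ≤ K * x ^ ((4 : ℝ) / 3) := by
  obtain ⟨A, B, K, hK, hT⟩ := Tsum_mul_asymp
  have hs1 : ∀ c, |esgn c| ≤ 1 := fun c => (abs_esgn c).le
  obtain ⟨L1, hL1⟩ := locF_tendsto esgn esgn_zero hs1 1 1 (by norm_num) (by norm_num) (by norm_num)
  obtain ⟨L2, hL2⟩ := locF_tendsto esgn esgn_zero hs1 1 (1 / 2) (by norm_num) (by norm_num)
    (by norm_num)
  obtain ⟨L3, hL3⟩ := locF_tendsto esgn esgn_zero hs1 (1 / 2) 1 (by norm_num) (by norm_num)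
    (by norm_num)
  obtain ⟨M1, hM1⟩ := locF_tendsto 1 rfl (by simp) 1 (1 / 3) (by norm_num) (by norm_num)
    (by norm_num)
  obtain ⟨M2, hM2⟩ := locF_tendsto 1 rfl (by simp) (1 / 3) 1 (by norm_num) (by norm_num)
    (by norm_num)
  obtain ⟨M3, hM3⟩ := locF_tendsto 1 rfl (by simp) (2 / 3) (2 / 3) (by norm_num) (by norm_num)
    (by norm_num)
  refine ⟨A ^ 2 * L1, A * B * (L2 + L3), K * (M1 + M2 + M3), fun x hx => ?_⟩
  have hlim1 := ((tendsto_const_nhds (x := ∑ m ∈ Finset.Icc 1 ⌊x⌋₊,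
    ∑ n ∈ Finset.Icc 1 ⌊x⌋₊, (tau12 (m * n) : ℝ))).sub
      ((hL1.const_mul (A ^ 2)).mul_const (x ^ 2))).sub
      (((hL2.add hL3).const_mul (A * B)).mul_const (x ^ ((3 : ℝ) / 2)))
  have hlim2 := (((hM1.add hM2).add hM3).const_mul K).mul_const (x ^ ((4 : ℝ) / 3))
  refine le_of_tendsto_of_tendsto hlim1.abs hlim2 ?_
  filter_upwards [eventually_gt_atTop ⌊x⌋₊] with Y hY
  have hS : ∀ p ∈ Nat.primesBelow Y, p.Prime := fun p hp => Nat.prime_of_mem_primesBelow hp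
  rw [double_sum_eq (Nat.primesBelow Y) hS x (fun p hp hpx =>
    Nat.mem_primesBelow.2 ⟨by omega, hp⟩)]
  generalize hSS : Nat.primesBelow Y = S at *
  rw [← weight_sum S esgn 1 1, ← weight_sum S esgn 1 (1 / 2), ← weight_sum S esgn (1 / 2) 1,
    ← weight_sum S 1 1 (1 / 3), ← weight_sum S 1 (1 / 3) 1, ← weight_sum S 1 (2 / 3) (2 / 3)]
  rw [← Finset.sum_add_distrib, ← Finset.sum_add_distrib, ← Finset.sum_add_distrib,
    Finset.mul_sum, Finset.mul_sum, Finset.mul_sum, Finset.sum_mul, Finset.sum_mul, Finset.sum_mul,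
    ← Finset.sum_sub_distrib, ← Finset.sum_sub_distrib]
  refine (Finset.abs_sum_le_sum_abs _ _).trans (Finset.sum_le_sum fun φ _ => ?_)
  have hi : 0 < ((∏ p : S, (p : ℕ) ^ expo1 (φ p) : ℕ) : ℝ) := by
    have : (∏ p : S, (p : ℕ) ^ expo1 (φ p) : ℕ) ≠ 0 :=
      Finset.prod_ne_zero_iff.2 fun p _ => pow_ne_zero _ (hS p p.2).ne_zero
    positivity
  have hj : 0 < ((∏ p : S, (p : ℕ) ^ expo2 (φ p) : ℕ) : ℝ) := by
    have : (∏ p : S, (p : ℕ) ^ expo2 (φ p) : ℕ) ≠ 0 :=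
      Finset.prod_ne_zero_iff.2 fun p _ => pow_ne_zero _ (hS p p.2).ne_zero
    positivity
  generalize ((∏ p : S, (p : ℕ) ^ expo1 (φ p) : ℕ) : ℝ) = i at *
  generalize ((∏ p : S, (p : ℕ) ^ expo2 (φ p) : ℕ) : ℝ) = j at *
  have hsg : |∏ p, esgn (φ p)| = 1 := by
    rw [Finset.abs_prod]; exact Finset.prod_eq_one fun p _ => abs_esgn _
  generalize (∏ p, esgn (φ p)) = s at *
  have hmain := hT (x / i) (x / j) (by positivity) (by positivity)
  have hd : ∀ k a : ℝ, 0 < k → (x / k) ^ a = x ^ a * k ^ (-a) := by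
    intro k a hk
    rw [Real.div_rpow hx.le hk.le, Real.rpow_neg hk.le]; ring
  have hd1 : ∀ k : ℝ, 0 < k → x / k = x * k ^ (-1 : ℝ) := by
    intro k hk
    rw [Real.rpow_neg_one]; ring
  have hx32 : x ^ ((3 : ℝ) / 2) = x * x ^ ((1 : ℝ) / 2) := by
    rw [show (3 : ℝ) / 2 = 1 + 1 / 2 by norm_num, Real.rpow_add hx, Real.rpow_one]
  have hx43 : x ^ ((4 : ℝ) / 3) = x * x ^ ((1 : ℝ) / 3) := by
    rw [show (4 : ℝ) / 3 = 1 + 1 / 3 by norm_num, Real.rpow_add hx, Real.rpow_one]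
  have hx43' : x ^ ((2 : ℝ) / 3) * x ^ ((2 : ℝ) / 3) = x * x ^ ((1 : ℝ) / 3) := by
    rw [← hx43, ← Real.rpow_add hx]; norm_num
  have e : s * (Tsum (x / i) * Tsum (x / j)) -
      A ^ 2 * (s * (i ^ (-1 : ℝ) * j ^ (-1 : ℝ))) * x ^ 2 -
      A * B * (s * (i ^ (-1 : ℝ) * j ^ (-(1 / 2) : ℝ)) + s * (i ^ (-(1 / 2) : ℝ) * j ^ (-1 : ℝ))) *
        x ^ ((3 : ℝ) / 2) =
      s * (Tsum (x / i) * Tsum (x / j) - A ^ 2 * ((x / i) * (x / j)) -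
        A * B * ((x / i) * (x / j) ^ ((1 : ℝ) / 2) + (x / i) ^ ((1 : ℝ) / 2) * (x / j))) := by
    rw [hd i _ hi, hd j _ hj, hx32, div_mul_div_comm]
    rw [Real.rpow_neg_one, Real.rpow_neg_one]
    ring
  rw [e, abs_mul, hsg, one_mul]
  refine hmain.trans (le_of_eq ?_)
  rw [hd i _ hi, hd j _ hj, hd i _ hi, hd j _ hj, hd1 i hi, hd1 j hj, hx43]
  simp only [Pi.one_apply, Finset.prod_const_one, one_mul]
  linear_combination K * i ^ (-(2 / 3) : ℝ) * j ^ (-(2 / 3) : ℝ) * hx43'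

/-- Under the Riemann hypothesis,
`∑_{m,n ≤ x} τ_{1,2}(mn) = C₁ x² + C₂ x^{3/2} + O(x^{7/5+ε})`. -/
theorem sum_tau12_mul_asymptotic_of_RH (hRH : RiemannHypothesis) :
    ∃ C₁ C₂ : ℝ, ∀ ε > (0 : ℝ),
      (fun x : ℝ =>
          (∑ m ∈ Finset.Icc 1 ⌊x⌋₊, ∑ n ∈ Finset.Icc 1 ⌊x⌋₊, (tau12 (m * n) : ℝ)) -
            C₁ * x ^ 2 - C₂ * x ^ ((3 : ℝ) / 2)) =O[atTop]
        fun x : ℝ => x ^ (7 / 5 + ε) := by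
  obtain ⟨C₁, C₂, K, h⟩ := main_bound
  refine ⟨C₁, C₂, fun ε hε => ?_⟩
  refine IsBigO.of_bound |K| ?_
  filter_upwards [eventually_ge_atTop (1 : ℝ)] with x hx
  have hx0 : 0 < x := by linarith
  rw [Real.norm_eq_abs, Real.norm_eq_abs, abs_of_pos (by positivity : 0 < x ^ (7 / 5 + ε))]
  refine (h x hx0).trans ?_
  have h1 : x ^ ((4 : ℝ) / 3) ≤ x ^ (7 / 5 + ε) :=
    Real.rpow_le_rpow_of_exponent_le hx (by linarith)
  calc K * x ^ ((4 : ℝ) / 3) ≤ |K| * x ^ ((4 : ℝ) / 3) := by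
        gcongr
        exact le_abs_self K
    _ ≤ |K| * x ^ (7 / 5 + ε) := by gcongr
end

section
/- For all positive integers m and n, τ(m·n) = Σ_{d | gcd(m,n)} τ(m/d) · τ(n/d) · μ(d) (the Busche–Ramanujan identity). -/
open scoped Pointwise in
theorem br_sum_coprime {a b : ℕ} (hab : a.Coprime b) (f : ℕ → ℤ) :
    ∑ d ∈ (a * b).divisors, f d = ∑ i ∈ a.divisors, ∑ j ∈ b.divisors, f (i * j) := by
  rw [Nat.divisors_mul, Finset.mul_def, Finset.sum_image hab.mul_injOn_divisors,
    Finset.sum_product]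

theorem br_aux (m : ℕ) : ∀ n : ℕ, 0 < m → 0 < n →
    ((m * n).divisors.card : ℤ) =
      ∑ d ∈ (Nat.gcd m n).divisors,
        ((m / d).divisors.card : ℤ) * ((n / d).divisors.card : ℤ) *
          ArithmeticFunction.moebius d := by
  induction m using Nat.strong_induction_on with
  | _ m ih =>
  intro n hm hn
  by_cases hc : Nat.gcd m n = 1
  · have hc' : Nat.Coprime m n := hc
    rw [hc, hc'.card_divisors_mul]
    simp
  obtain ⟨p, hp, hpd⟩ := Nat.exists_prime_and_dvd hc
  have hpm := hpd.trans (Nat.gcd_dvd_left m n)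
  have hpn := hpd.trans (Nat.gcd_dvd_right m n)
  obtain ⟨a, m', hm', rfl⟩ := Nat.exists_eq_pow_mul_and_not_dvd hm.ne' p hp.ne_one
  obtain ⟨b, n', hn', rfl⟩ := Nat.exists_eq_pow_mul_and_not_dvd hn.ne' p hp.ne_one
  obtain ⟨a, rfl⟩ : ∃ a', a = a' + 1 := Nat.exists_eq_succ_of_ne_zero (by rintro rfl; simp at hpm; exact hm' hpm)
  obtain ⟨b, rfl⟩ : ∃ a', b = a' + 1 := Nat.exists_eq_succ_of_ne_zero (by rintro rfl; simp at hpn; exact hn' hpn)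
  have hm0 : 0 < m' := Nat.pos_of_mul_pos_left hm
  have hn0 : 0 < n' := Nat.pos_of_mul_pos_left hn
  have cm : ∀ k, Nat.Coprime (p ^ k) m' := fun k => ((Nat.Prime.coprime_iff_not_dvd hp).2 hm').pow_left k
  have cn : ∀ k, Nat.Coprime (p ^ k) n' := fun k => ((Nat.Prime.coprime_iff_not_dvd hp).2 hn').pow_left k
  have hlt : m' < p ^ (a+1) * m' := by
    have := Nat.one_lt_pow (Nat.succ_ne_zero a) hp.one_lt
    exact lt_mul_of_one_lt_left hm0 this
  have IH := ih m' hlt n' hm0 hn0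
  have hg : Nat.gcd (p ^ (a+1) * m') (p ^ (b+1) * n') = p ^ (min a b + 1) * Nat.gcd m' n' := by
    rw [Nat.Coprime.gcd_mul _ (cn _), Nat.Coprime.gcd_mul_right_cancel _ (cm _).symm,
      Nat.Coprime.gcd_mul_left_cancel _ (cn _)]
    congr 1
    rcases le_total a b with h | h
    · rw [min_eq_left h]
      exact Nat.gcd_eq_left (pow_dvd_pow p (by omega))
    · rw [min_eq_right h]
      exact Nat.gcd_eq_right (pow_dvd_pow p (by omega))
  have cg : ∀ k, Nat.Coprime (p ^ k) (Nat.gcd m' n') := fun k => (cm k).coprime_dvd_right (Nat.gcd_dvd_left _ _)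
  have hL : p ^ (a+1) * m' * (p ^ (b+1) * n') = p ^ (a + b + 2) * (m' * n') := by ring
  rw [hg, br_sum_coprime (cg _), hL, Nat.Coprime.card_divisors_mul ((cm _).mul_right (cn _)),
    Nat.sum_divisors_prime_pow hp, Finset.sum_range_succ', Finset.sum_range_succ', Finset.sum_eq_zero]
  · push_cast
    rw [IH, Finset.mul_sum, zero_add, ← Finset.sum_add_distrib]
    refine Finset.sum_congr rfl fun d hd => ?_
    have hd' := Nat.dvd_of_mem_divisors hd
    have hdm := hd'.trans (Nat.gcd_dvd_left _ _)
    have hdn := hd'.trans (Nat.gcd_dvd_right _ _)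
    have e1 : ∀ (k x : ℕ), d ∣ x → p ^ (k+1) * x / (p * d) = p ^ k * (x / d) := by
      intro k x hx
      rw [pow_succ', mul_assoc, Nat.mul_div_mul_left _ _ hp.pos, Nat.mul_div_assoc _ hx]
    have cpd : Nat.Coprime p d := by simpa using (cg 1).coprime_dvd_right hd'
    have cm' : ∀ k, Nat.Coprime (p ^ k) (m' / d) := fun k => (cm k).coprime_dvd_right (Nat.div_dvd_of_dvd hdm)
    have cn' : ∀ k, Nat.Coprime (p ^ k) (n' / d) := fun k => (cn k).coprime_dvd_right (Nat.div_dvd_of_dvd hdn)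
    have tp : ∀ k, (p ^ k).divisors.card = k + 1 := fun k => by
      simp [Nat.divisors_prime_pow hp]
    simp only [zero_add, pow_zero, one_mul, pow_one]
    rw [e1 _ _ hdm, e1 _ _ hdn, Nat.mul_div_assoc _ hdm, Nat.mul_div_assoc _ hdn,
      (cm' _).card_divisors_mul, (cm' _).card_divisors_mul, (cn' _).card_divisors_mul,
      (cn' _).card_divisors_mul,
      ArithmeticFunction.isMultiplicative_moebius.map_mul_of_coprime cpd,
      ArithmeticFunction.moebius_apply_prime hp]
    simp only [tp]
    push_cast
    ring
  · intro i _
    refine Finset.sum_eq_zero fun d hd => ?_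
    have hd' := Nat.dvd_of_mem_divisors hd
    rw [ArithmeticFunction.isMultiplicative_moebius.map_mul_of_coprime ((cg _).coprime_dvd_right hd'),
      ArithmeticFunction.moebius_apply_prime_pow hp (by omega)]
    simp

/-- **Busche–Ramanujan identity**: for positive integers `m` and `n`,
`τ(mn) = ∑_{d ∣ gcd(m,n)} τ(m/d) τ(n/d) μ(d)`. -/
theorem busche_ramanujan_tau (m n : ℕ) (hm : 0 < m) (hn : 0 < n) :
    ((m * n).divisors.card : ℤ) =
      ∑ d ∈ (Nat.gcd m n).divisors,
        ((m / d).divisors.card : ℤ) * ((n / d).divisors.card : ℤ) *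
          ArithmeticFunction.moebius d := by
  exact br_aux m n hm hn
end

section
/- For every real x ≥ 1, Σ_{m ≤ x} Σ_{n ≤ x} τ(m·n) = Σ_{l ≤ x} μ(l) · ( Σ_{j ≤ x/l} τ(j) )², where all summation variables range over positive integers. -/
/-- `τ(mn)` counts the pairs `(a, b)` with `a ∣ m`, `b ∣ n`, `m / a` coprime to `b`. -/
lemma tau_mul_aux (m n : ℕ) (hm : m ≠ 0) (hn : n ≠ 0) :
    (m * n).divisors.card =
      ((m.divisors ×ˢ n.divisors).filter (fun p => Nat.Coprime (m / p.1) p.2)).card := by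
  refine Finset.card_bij' (fun d _ => (d.gcd m, d / d.gcd m)) (fun p _ => p.1 * p.2) ?_ ?_ ?_ ?_
  · intro d hd
    have hd1 := Nat.dvd_of_mem_divisors hd
    have hg : 0 < d.gcd m := Nat.gcd_pos_of_pos_right _ (Nat.pos_of_ne_zero hm)
    have hc : Nat.Coprime (d / d.gcd m) (m / d.gcd m) := Nat.coprime_div_gcd_div_gcd hg
    simp only [Finset.mem_filter, Finset.mem_product, Nat.mem_divisors]
    refine ⟨⟨⟨Nat.gcd_dvd_right _ _, hm⟩, ?_, hn⟩, hc.symm⟩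
    refine hc.dvd_of_dvd_mul_left ?_
    apply Nat.dvd_of_mul_dvd_mul_left hg
    rw [Nat.mul_div_cancel' (Nat.gcd_dvd_left _ _), ← mul_assoc,
      Nat.mul_div_cancel' (Nat.gcd_dvd_right _ _)]
    exact hd1
  · rintro ⟨a, b⟩ hp
    simp only [Finset.mem_filter, Finset.mem_product, Nat.mem_divisors] at hp
    exact Nat.mem_divisors.2 ⟨mul_dvd_mul hp.1.1.1 hp.1.2.1, mul_ne_zero hm hn⟩
  · intro d hd
    exact Nat.mul_div_cancel' (Nat.gcd_dvd_left _ _)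
  · rintro ⟨a, b⟩ hp
    simp only [Finset.mem_filter, Finset.mem_product, Nat.mem_divisors] at hp
    obtain ⟨⟨⟨⟨c, rfl⟩, -⟩, -⟩, hc⟩ := hp
    have ha : 0 < a := Nat.pos_of_ne_zero (left_ne_zero_of_mul hm)
    rw [Nat.mul_div_cancel_left _ ha] at hc
    have : (a * b).gcd (a * c) = a := by
      rw [Nat.gcd_mul_left, hc.symm.gcd_eq_one, mul_one]
    simp only [this, Nat.mul_div_cancel_left _ ha]

lemma coprime_ind (N u v : ℕ) (hu : u ≠ 0) (huN : u ≤ N) :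
    (if Nat.Coprime u v then (1 : ℤ) else 0) =
      ∑ l ∈ Finset.Icc 1 N, ArithmeticFunction.moebius l *
        ((if l ∣ u then 1 else 0) * (if l ∣ v then 1 else 0)) := by
  have hg : u.gcd v ≠ 0 := by simp [Nat.gcd_eq_zero_iff, hu]
  have h := congrArg (fun f => f (u.gcd v)) ArithmeticFunction.moebius_mul_coe_zeta
  simp only [ArithmeticFunction.coe_mul_zeta_apply,
    ArithmeticFunction.one_apply] at h
  simp only [Nat.coprime_iff_gcd_eq_one]
  rw [← h]
  have : (u.gcd v).divisors = (Finset.Icc 1 N).filter (fun l => l ∣ u ∧ l ∣ v) := by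
    ext l
    simp only [Nat.mem_divisors, Finset.mem_filter, Finset.mem_Icc, Nat.dvd_gcd_iff]
    constructor
    · rintro ⟨⟨h1, h2⟩, -⟩
      exact ⟨⟨Nat.pos_of_dvd_of_pos h1 (Nat.pos_of_ne_zero hu),
        (Nat.le_of_dvd (Nat.pos_of_ne_zero hu) h1).trans huN⟩, h1, h2⟩
    · rintro ⟨-, h⟩
      exact ⟨h, hg⟩
  rw [this, Finset.sum_filter]
  refine Finset.sum_congr rfl fun l _ => ?_
  by_cases h1 : l ∣ u <;> by_cases h2 : l ∣ v <;> simp [h1, h2]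

lemma tau_mul_sum (N m n : ℕ) (hm : m ≠ 0) (hn : n ≠ 0) (hmN : m ≤ N) :
    ((m * n).divisors.card : ℤ) = ∑ l ∈ Finset.Icc 1 N, ArithmeticFunction.moebius l *
      ((∑ a ∈ m.divisors, if l ∣ a then 1 else 0) *
        (∑ b ∈ n.divisors, if l ∣ b then 1 else 0)) := by
  rw [tau_mul_aux m n hm hn, Finset.card_filter]
  push_cast
  rw [Finset.sum_product]
  rw [Nat.sum_div_divisors m (fun a => ∑ b ∈ n.divisors, if Nat.Coprime a b then (1 : ℤ) else 0)]
  have : ∀ a ∈ m.divisors, (∑ b ∈ n.divisors, if Nat.Coprime a b then (1 : ℤ) else 0) =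
      ∑ b ∈ n.divisors, ∑ l ∈ Finset.Icc 1 N, ArithmeticFunction.moebius l *
        ((if l ∣ a then 1 else 0) * (if l ∣ b then 1 else 0)) := fun a ha =>
    Finset.sum_congr rfl fun b _ => coprime_ind N a b (Nat.pos_of_mem_divisors ha).ne'
      ((Nat.divisor_le ha).trans hmN)
  rw [Finset.sum_congr rfl this]
  have h2 : ∀ a ∈ m.divisors, (∑ b ∈ n.divisors, ∑ l ∈ Finset.Icc 1 N,
      ArithmeticFunction.moebius l * ((if l ∣ a then 1 else 0) * (if l ∣ b then 1 else 0))) =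
      ∑ l ∈ Finset.Icc 1 N, ∑ b ∈ n.divisors,
      ArithmeticFunction.moebius l * ((if l ∣ a then 1 else 0) * (if l ∣ b then 1 else 0)) :=
    fun a _ => Finset.sum_comm
  rw [Finset.sum_congr rfl h2, Finset.sum_comm]
  refine Finset.sum_congr rfl fun l _ => ?_
  rw [Finset.sum_mul_sum, Finset.mul_sum]
  refine Finset.sum_congr rfl fun a _ => ?_
  rw [Finset.mul_sum]

lemma count_mul (m l : ℕ) (hl : 0 < l) :
    (∑ a ∈ (l * m).divisors, if l ∣ a then (1 : ℤ) else 0) = m.divisors.card := by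
  rw [← Finset.sum_filter, Finset.sum_const, nsmul_one]
  congr 1
  symm
  refine Finset.card_bij (fun a _ => l * a) ?_ ?_ ?_
  · intro a ha
    simp only [Finset.mem_filter, Nat.mem_divisors] at ha ⊢
    exact ⟨⟨mul_dvd_mul_left l ha.1, mul_ne_zero hl.ne' ha.2⟩, dvd_mul_right _ _⟩
  · intro a _ b _ h
    exact Nat.eq_of_mul_eq_mul_left hl h
  · intro b hb
    simp only [Finset.mem_filter, Nat.mem_divisors] at hb
    obtain ⟨⟨h1, h2⟩, c, rfl⟩ := hb
    exact ⟨c, Nat.mem_divisors.2 ⟨Nat.dvd_of_mul_dvd_mul_left hl h1, right_ne_zero_of_mul h2⟩, rfl⟩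

lemma sum_count (N l : ℕ) (hl : 0 < l) :
    (∑ m ∈ Finset.Icc 1 N, ∑ a ∈ m.divisors, if l ∣ a then (1 : ℤ) else 0) =
      ∑ j ∈ Finset.Icc 1 (N / l), (j.divisors.card : ℤ) := by
  symm
  refine Finset.sum_of_injOn (fun j => l * j) ?_ ?_ ?_ ?_
  · intro a _ b _ h
    exact Nat.eq_of_mul_eq_mul_left hl h
  · intro j hj
    simp only [Finset.coe_Icc, Set.mem_Icc] at hj ⊢
    refine ⟨Nat.mul_pos hl hj.1, ?_⟩
    rw [mul_comm]
    exact (Nat.le_div_iff_mul_le hl).1 hj.2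
  · intro m hm hm'
    refine Finset.sum_eq_zero fun a ha => if_neg fun hla => hm' ?_
    obtain ⟨c, rfl⟩ := hla.trans (Nat.dvd_of_mem_divisors ha)
    simp only [Finset.mem_Icc] at hm
    refine ⟨c, ?_, rfl⟩
    simp only [Finset.coe_Icc, Set.mem_Icc]
    exact ⟨Nat.pos_of_mul_pos_left hm.1, (Nat.le_div_iff_mul_le hl).2 (by rw [mul_comm]; exact hm.2)⟩
  · intro j _
    exact (count_mul j l hl).symm

/-- For every real `x ≥ 1`,
`∑_{m ≤ x} ∑_{n ≤ x} τ(mn) = ∑_{l ≤ x} μ(l) (∑_{j ≤ x/l} τ(j))²`. -/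
theorem sum_tau_mul_eq_moebius_sum (x : ℝ) (hx : 1 ≤ x) :
    ∑ m ∈ Finset.Icc 1 ⌊x⌋₊, ∑ n ∈ Finset.Icc 1 ⌊x⌋₊, ((m * n).divisors.card : ℤ) =
      ∑ l ∈ Finset.Icc 1 ⌊x⌋₊,
        ArithmeticFunction.moebius l *
          (∑ j ∈ Finset.Icc 1 ⌊x / (l : ℝ)⌋₊, ((j.divisors.card : ℤ))) ^ 2 := by
  have h1 : ∀ m ∈ Finset.Icc 1 ⌊x⌋₊, ∑ n ∈ Finset.Icc 1 ⌊x⌋₊, ((m * n).divisors.card : ℤ) =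
      ∑ l ∈ Finset.Icc 1 ⌊x⌋₊, ∑ n ∈ Finset.Icc 1 ⌊x⌋₊, ArithmeticFunction.moebius l *
      ((∑ a ∈ m.divisors, if l ∣ a then 1 else 0) *
        (∑ b ∈ n.divisors, if l ∣ b then 1 else 0)) := by
    intro m hm
    rw [Finset.sum_comm]
    refine Finset.sum_congr rfl fun n hn => ?_
    rw [Finset.mem_Icc] at hm hn
    exact tau_mul_sum _ m n (by omega) (by omega) hm.2
  rw [Finset.sum_congr rfl h1, Finset.sum_comm]
  refine Finset.sum_congr rfl fun l hl => ?_
  rw [Nat.floor_div_natCast, ← sum_count _ l (Finset.mem_Icc.1 hl).1, sq, Finset.sum_mul_sum,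
    Finset.mul_sum]
  simp_rw [Finset.mul_sum]
end

section
/- For all complex numbers x, y with |x| < 1 and |y| < 1, the double series Σ_{a,b ≥ 0} (a + b + 1)·x^a·y^b converges absolutely and equals (1 − x·y) / ( (1 − x)²·(1 − y)² ). -/
/-- For `|x| < 1`, `|y| < 1`, the series `∑_{a,b ≥ 0} (a+b+1) x^a y^b` converges
absolutely and equals `(1 - xy)/((1-x)²(1-y)²)`. -/
theorem tsum_tau_power_series (x y : ℂ) (hx : ‖x‖ < 1) (hy : ‖y‖ < 1) :
    Summable (fun q : ℕ × ℕ => ‖((q.1 + q.2 + 1 : ℕ) : ℂ) * x ^ q.1 * y ^ q.2‖) ∧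
      ∑' q : ℕ × ℕ, ((q.1 + q.2 + 1 : ℕ) : ℂ) * x ^ q.1 * y ^ q.2 =
        (1 - x * y) / ((1 - x) ^ 2 * (1 - y) ^ 2) := by
  have key : ∀ {f g : ℕ → ℂ} {s t : ℂ}, HasSum f s → HasSum g t →
      HasSum (fun q : ℕ × ℕ => f q.1 * g q.2) (s * t) := fun hf hg =>
    hf.mul hg (summable_mul_of_summable_norm hf.summable.norm hg.summable.norm)
  have hne : ∀ {z : ℂ}, ‖z‖ < 1 → 1 - z ≠ 0 := by
    intro z hz h
    have h1 : z = 1 := (sub_eq_zero.mp h).symm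
    simp [h1] at hz
  have gx := hasSum_geometric_of_norm_lt_one hx
  have gy := hasSum_geometric_of_norm_lt_one hy
  have cx := hasSum_coe_mul_geometric_of_norm_lt_one hx
  have cy := hasSum_coe_mul_geometric_of_norm_lt_one hy
  have h1 := hne hx
  have h2 := hne hy
  have H : HasSum (fun q : ℕ × ℕ => ((q.1 + q.2 + 1 : ℕ) : ℂ) * x ^ q.1 * y ^ q.2)
      ((1 - x * y) / ((1 - x) ^ 2 * (1 - y) ^ 2)) := by
    have h := ((key cx gy).add (key gx cy)).add (key gx gy)
    have e : (1 - x * y) / ((1 - x) ^ 2 * (1 - y) ^ 2) =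
        x / (1 - x) ^ 2 * (1 - y)⁻¹ + (1 - x)⁻¹ * (y / (1 - y) ^ 2)
          + (1 - x)⁻¹ * (1 - y)⁻¹ := by
      field_simp
      ring
    rw [e]
    refine h.congr_fun ?_
    intro q
    push_cast
    ring
  exact ⟨H.summable.norm, H.tsum_eq⟩
end

section
/- For all complex z, w with Re z > 1 and Re w > 1, the double series Σ_{m,n ≥ 1} τ(m·n) · m^{−z} · n^{−w} converges absolutely and equals ζ(z)² · ζ(w)² / ζ(z + w). -/
/-- `τ(mn)` counts the factorizations `m = ab`, `n = ec` with `b`, `c` coprime. -/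
lemma aux_card (m n : ℕ) (hm : m ≠ 0) (hn : n ≠ 0) :
    ((m.divisorsAntidiagonal ×ˢ n.divisorsAntidiagonal).filter
      (fun p => Nat.Coprime p.1.2 p.2.2)).card = (m * n).divisors.card := by
  have key : ∀ a b c : ℕ, Nat.Coprime b c → Nat.gcd (a * c) (a * b) = a := by
    intro a b c h
    rw [Nat.gcd_mul_left, Nat.gcd_comm, h, mul_one]
  apply Finset.card_nbij (fun p => p.1.1 * p.2.2)
  · rintro ⟨⟨a, b⟩, ⟨e, c⟩⟩ h
    simp only [Finset.coe_filter, Finset.mem_product, Nat.mem_divisorsAntidiagonal,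
      Set.mem_ofPred_eq, Finset.mem_filter] at h
    obtain ⟨⟨⟨h1, -⟩, h2, -⟩, -⟩ := h
    simp only [Finset.mem_coe, Nat.mem_divisors]
    refine ⟨⟨b * e, ?_⟩, mul_ne_zero hm hn⟩
    rw [← h1, ← h2]; ring
  · rintro ⟨⟨a, b⟩, ⟨e, c⟩⟩ h ⟨⟨a', b'⟩, ⟨e', c'⟩⟩ h' heq
    simp only [Finset.coe_filter, Finset.mem_product, Nat.mem_divisorsAntidiagonal,
      Set.mem_ofPred_eq] at h h'
    obtain ⟨⟨⟨h1, -⟩, h2, -⟩, h3⟩ := h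
    obtain ⟨⟨⟨h1', -⟩, h2', -⟩, h3'⟩ := h'
    simp only at heq
    have ha : a = a' := by
      rw [← key a b c h3, ← key a' b' c' h3', h1, h1', heq]
    subst ha
    have ha0 : 0 < a := Nat.pos_of_ne_zero (by rintro rfl; simp at h1; omega)
    have hb : b = b' := Nat.eq_of_mul_eq_mul_left ha0 (h1.trans h1'.symm)
    have hc : c = c' := Nat.eq_of_mul_eq_mul_left ha0 heq
    subst hb hc
    have hc0 : 0 < c := Nat.pos_of_ne_zero (by rintro rfl; simp at h2; omega)
    have he : e = e' := Nat.eq_of_mul_eq_mul_right hc0 (h2.trans h2'.symm)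
    subst he
    rfl
  · intro k hk
    simp only [Finset.mem_coe, Nat.mem_divisors] at hk
    obtain ⟨hk, -⟩ := hk
    have hg : 0 < Nat.gcd m k := Nat.gcd_pos_of_pos_left _ (Nat.pos_of_ne_zero hm)
    obtain ⟨b, hb⟩ := Nat.gcd_dvd_left m k
    obtain ⟨c, hc⟩ := Nat.gcd_dvd_right m k
    have hbc : Nat.Coprime b c := by
      have h := Nat.gcd_mul_left (Nat.gcd m k) b c
      rw [← hb, ← hc] at h
      exact Nat.eq_of_mul_eq_mul_left hg (by rw [← h, mul_one])
    have hcn : c ∣ n := by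
      have h : Nat.gcd m k * c ∣ Nat.gcd m k * (b * n) := by
        rw [← mul_assoc, ← hb, ← hc]; exact hk
      exact hbc.symm.dvd_of_dvd_mul_left (Nat.dvd_of_mul_dvd_mul_left hg h)
    obtain ⟨e, he⟩ := hcn
    refine ⟨((Nat.gcd m k, b), (e, c)), ?_, hc.symm⟩
    simp only [Finset.coe_filter, Finset.mem_product, Nat.mem_divisorsAntidiagonal,
      Set.mem_ofPred_eq]
    exact ⟨⟨⟨hb.symm, hm⟩, by rw [he, mul_comm], hn⟩, hbc⟩

/-- the coprime part of the double series -/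
noncomputable def auxC (z w : ℂ) (p : ℕ × ℕ) : ℂ :=
  if Nat.Coprime p.1 p.2 then (p.1 : ℂ) ^ (-z) * (p.2 : ℂ) ^ (-w) else 0

lemma aux_summable (z : ℂ) (hz : 1 < z.re) : Summable (fun n : ℕ => ‖(n : ℂ) ^ (-z)‖) := by
  have h := (Complex.summable_one_div_nat_cpow (p := z)).2 hz
  rw [summable_norm_iff]
  simpa [Complex.cpow_neg] using h

lemma aux_tsum (z : ℂ) (hz : 1 < z.re) : ∑' n : ℕ, (n : ℂ) ^ (-z) = riemannZeta z := by
  rw [zeta_eq_tsum_one_div_nat_cpow hz]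
  simp [Complex.cpow_neg]

lemma aux_ne (z : ℂ) (hz : 1 < z.re) : -z ≠ 0 := by
  intro h
  have : z = 0 := by simpa using h
  rw [this] at hz
  simp at hz
  linarith

lemma auxC_summable (z w : ℂ) (hz : 1 < z.re) (hw : 1 < w.re) :
    Summable (fun p => ‖auxC z w p‖) := by
  refine Summable.of_nonneg_of_le (fun _ => norm_nonneg _) (fun p => ?_)
    ((aux_summable z hz).mul_norm (aux_summable w hw))
  unfold auxC
  split_ifs
  · exact le_rfl
  · rw [norm_zero]; exact norm_nonneg _

lemma aux_cpow_mul (a b : ℕ) (z : ℂ) :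
    ((a * b : ℕ) : ℂ) ^ z = (a : ℂ) ^ z * (b : ℂ) ^ z := by
  rw [Nat.cast_mul, Complex.natCast_mul_natCast_cpow]

/-- `ζ(z) ζ(w) = ζ(z+w) C(z,w)` -/
lemma aux_coprime (z w : ℂ) (hz : 1 < z.re) (hw : 1 < w.re) :
    riemannZeta z * riemannZeta w = riemannZeta (z + w) * ∑' p, auxC z w p := by
  have hzw : 1 < (z + w).re := by rw [Complex.add_re]; linarith
  have hz0 := aux_ne z hz
  have hw0 := aux_ne w hw
  have hs := summable_mul_of_summable_norm (aux_summable (z + w) hzw) (auxC_summable z w hz hw)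
  have h1 := hs.hasSum.tsum_fiberwise
    (fun x : ℕ × (ℕ × ℕ) => ((x.1 * x.2.1, x.1 * x.2.2) : ℕ × ℕ))
  rw [← tsum_mul_tsum_of_summable_norm (aux_summable (z + w) hzw) (auxC_summable z w hz hw),
    aux_tsum _ hzw] at h1
  rw [← h1.tsum_eq, ← aux_tsum z hz, ← aux_tsum w hw,
    tsum_mul_tsum_of_summable_norm (aux_summable z hz) (aux_summable w hw)]
  apply tsum_congr
  rintro ⟨m, n⟩
  have hval : ∀ d b c : ℕ, d * b = m → d * c = n → d ≠ 0 →
      (d : ℂ) ^ (-(z + w)) * ((b : ℂ) ^ (-z) * (c : ℂ) ^ (-w)) =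
        (m : ℂ) ^ (-z) * (n : ℂ) ^ (-w) := by
    intro d b c h1 h2 hd
    rw [← h1, ← h2, aux_cpow_mul, aux_cpow_mul, neg_add,
      Complex.cpow_add _ _ (Nat.cast_ne_zero.2 hd)]
    ring
  have hzw0 := aux_ne _ hzw
  by_cases hmn : m = 0 ∨ n = 0
  · have hr : (m : ℂ) ^ (-z) * (n : ℂ) ^ (-w) = 0 := by
      rcases hmn with rfl | rfl
      · simp [Complex.zero_cpow hz0]
      · simp [Complex.zero_cpow hw0]
    simp only
    rw [hr, eq_comm]
    convert tsum_zero with x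
    obtain ⟨⟨d, b, c⟩, hx⟩ := x
    simp only [Set.mem_preimage, Set.mem_singleton_iff, Prod.mk.injEq] at hx
    simp only [auxC]
    by_cases hd : d = 0
    · subst hd
      rw [Nat.cast_zero, Complex.zero_cpow hzw0, zero_mul]
    · split_ifs
      · rw [hval d b c hx.1 hx.2 hd, hr]
      · simp
  · push Not at hmn
    obtain ⟨hm, hn⟩ := hmn
    have hg : 0 < Nat.gcd m n := Nat.gcd_pos_of_pos_left _ (Nat.pos_of_ne_zero hm)
    obtain ⟨b, hb⟩ := Nat.gcd_dvd_left m n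
    obtain ⟨c, hc⟩ := Nat.gcd_dvd_right m n
    have hbc : Nat.Coprime b c := by
      have h := Nat.gcd_mul_left (Nat.gcd m n) b c
      rw [← hb, ← hc] at h
      exact Nat.eq_of_mul_eq_mul_left hg (by rw [← h, mul_one])
    rw [tsum_eq_single (⟨(Nat.gcd m n, b, c), by simp [← hb, ← hc]⟩ :
      ((fun x : ℕ × (ℕ × ℕ) => ((x.1 * x.2.1, x.1 * x.2.2) : ℕ × ℕ)) ⁻¹' {(m, n)}))]
    · simp only [auxC, if_pos hbc]
      exact (hval _ b c hb.symm hc.symm hg.ne').symm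
    · rintro ⟨⟨d, b', c'⟩, hx⟩ hne
      simp only [Set.mem_preimage, Set.mem_singleton_iff, Prod.mk.injEq] at hx
      simp only [auxC]
      split_ifs with hcop
      · exfalso
        apply hne
        obtain ⟨e1, e2⟩ := hx
        have hd : d = Nat.gcd m n := by
          rw [← e1, ← e2, Nat.gcd_mul_left, hcop, mul_one]
        have hb' : b' = b := Nat.eq_of_mul_eq_mul_left hg (by rw [← hb, ← hd, e1])
        have hc' : c' = c := Nat.eq_of_mul_eq_mul_left hg (by rw [← hc, ← hd, e2])
        simp only [hd, hb', hc']
      · simp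

lemma aux_main (z w : ℂ) (hz : 1 < z.re) (hw : 1 < w.re) :
    HasSum (fun q : ℕ × ℕ =>
        ((q.1 * q.2).divisors.card : ℂ) * (q.1 : ℂ) ^ (-z) * (q.2 : ℂ) ^ (-w))
      ((riemannZeta z * riemannZeta w) * ∑' p, auxC z w p) := by
  have hz0 := aux_ne z hz
  have hw0 := aux_ne w hw
  have hs1 := (aux_summable z hz).mul_norm (aux_summable w hw)
  have hs := summable_mul_of_summable_norm hs1 (auxC_summable z w hz hw)
  have h1 := hs.hasSum.tsum_fiberwise
    (fun x : (ℕ × ℕ) × (ℕ × ℕ) => ((x.1.1 * x.2.1, x.1.2 * x.2.2) : ℕ × ℕ))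
  rw [← tsum_mul_tsum_of_summable_norm hs1 (auxC_summable z w hz hw),
    ← tsum_mul_tsum_of_summable_norm (aux_summable z hz) (aux_summable w hw),
    aux_tsum _ hz, aux_tsum _ hw] at h1
  refine (congrArg (fun F : ℕ × ℕ → ℂ => HasSum F _) ?_).mpr h1
  funext ⟨m, n⟩
  have hval : ∀ a e b c : ℕ, a * b = m → e * c = n →
      (a : ℂ) ^ (-z) * (e : ℂ) ^ (-w) * auxC z w (b, c) =
        if Nat.Coprime b c then (m : ℂ) ^ (-z) * (n : ℂ) ^ (-w) else 0 := by
    intro a e b c h1 h2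
    simp only [auxC]
    split_ifs
    · rw [← h1, ← h2, aux_cpow_mul, aux_cpow_mul]
      ring
    · simp
  by_cases hmn : m = 0 ∨ n = 0
  · have hr : (m : ℂ) ^ (-z) * (n : ℂ) ^ (-w) = 0 := by
      rcases hmn with rfl | rfl
      · simp [Complex.zero_cpow hz0]
      · simp [Complex.zero_cpow hw0]
    simp only
    rw [mul_assoc, hr, mul_zero, eq_comm]
    convert tsum_zero with x
    obtain ⟨⟨⟨a, e⟩, b, c⟩, hx⟩ := x
    simp only [Set.mem_preimage, Set.mem_singleton_iff, Prod.mk.injEq] at hx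
    simp only
    rw [hval a e b c hx.1 hx.2, hr, ite_self]
  · push Not at hmn
    obtain ⟨hm, hn⟩ := hmn
    have e1 : ∀ x : ((fun x : (ℕ × ℕ) × (ℕ × ℕ) =>
        ((x.1.1 * x.2.1, x.1.2 * x.2.2) : ℕ × ℕ)) ⁻¹' {(m, n)}),
        (x.1.1.1 : ℂ) ^ (-z) * (x.1.1.2 : ℂ) ^ (-w) * auxC z w x.1.2 =
        if Nat.Coprime x.1.2.1 x.1.2.2 then (m : ℂ) ^ (-z) * (n : ℂ) ^ (-w) else 0 := by
      rintro ⟨⟨⟨a, e⟩, b, c⟩, hx⟩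
      simp only [Set.mem_preimage, Set.mem_singleton_iff, Prod.mk.injEq] at hx
      exact hval a e b c hx.1 hx.2
    rw [tsum_congr e1, tsum_subtype _ (fun x : (ℕ × ℕ) × (ℕ × ℕ) =>
      if Nat.Coprime x.2.1 x.2.2 then (m : ℂ) ^ (-z) * (n : ℂ) ^ (-w) else 0),
      ← (Equiv.prodProdProdComm ℕ ℕ ℕ ℕ).tsum_eq,
      tsum_eq_sum (s := (m.divisorsAntidiagonal ×ˢ n.divisorsAntidiagonal).filter
      (fun p => Nat.Coprime p.1.2 p.2.2))]
    · rw [Finset.sum_congr rfl (g := fun _ => (m : ℂ) ^ (-z) * (n : ℂ) ^ (-w)),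
        Finset.sum_const, aux_card m n hm hn, nsmul_eq_mul, mul_assoc]
      rintro ⟨⟨a, b⟩, ⟨e, c⟩⟩ hx
      simp only [Finset.mem_product, Nat.mem_divisorsAntidiagonal, Finset.mem_filter] at hx
      rw [Set.indicator_of_mem]
      · simp [hx.2]
      · simp [hx.1.1.1, hx.1.2.1]
    · rintro ⟨⟨a, b⟩, ⟨e, c⟩⟩ hx
      simp only [Finset.mem_product, Nat.mem_divisorsAntidiagonal, Finset.mem_filter] at hx
      rw [Set.indicator_apply_eq_zero]
      intro h2
      simp only [Equiv.prodProdProdComm_apply, Set.mem_preimage,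
        Set.mem_singleton_iff, Prod.mk.injEq] at h2
      simp only [Equiv.prodProdProdComm_apply]
      split_ifs with h3
      · exact absurd ⟨⟨⟨h2.1, hm⟩, h2.2, hn⟩, h3⟩ hx
      · rfl

/-- For `Re z > 1`, `Re w > 1`, the double Dirichlet series `∑_{m,n ≥ 1} τ(mn) m^{-z} n^{-w}`
converges absolutely and equals `ζ(z)² ζ(w)² / ζ(z+w)`.  (The terms with `m = 0` or `n = 0`
vanish, since `τ(0) = 0` and `0^{-z} = 0`.) -/
theorem tsum_tau_mul_eq_zeta (z w : ℂ) (hz : 1 < z.re) (hw : 1 < w.re) :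
    Summable (fun q : ℕ × ℕ =>
        ‖((q.1 * q.2).divisors.card : ℂ) * (q.1 : ℂ) ^ (-z) * (q.2 : ℂ) ^ (-w)‖) ∧
      ∑' q : ℕ × ℕ, ((q.1 * q.2).divisors.card : ℂ) * (q.1 : ℂ) ^ (-z) * (q.2 : ℂ) ^ (-w) =
        riemannZeta z ^ 2 * riemannZeta w ^ 2 / riemannZeta (z + w) := by
  have h := aux_main z w hz hw
  have hzw : 1 < (z + w).re := by rw [Complex.add_re]; linarith
  refine ⟨summable_norm_iff.2 h.summable, ?_⟩
  rw [h.tsum_eq, eq_div_iff (riemannZeta_ne_zero_of_one_lt_re hzw)]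
  have h2 := aux_coprime z w hz hw
  linear_combination (-(riemannZeta z * riemannZeta w)) * h2
end

section
/- For all complex numbers x, y with |x| < 1 and |y| < 1, the double series Σ_{a,b ≥ 0} τ_{1,2}(p^{a+b})·x^a·y^b (whose coefficients do not depend on the prime p, since τ_{1,2}(p^k) = ⌊k/2⌋ + 1) converges absolutely and equals (1 + x·y − x²·y − x·y²) / ( (1 − x)·(1 − x²)·(1 − y)·(1 − y²) ). -/
theorem tau12_prime_pow (p : ℕ) (hp : p.Prime) (k : ℕ) : tau12 (p ^ k) = k / 2 + 1 := by
  have key : Function.Bijective (fun j : Fin (k / 2 + 1) =>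
      (⟨(p ^ (k - 2 * j.1), p ^ j.1), pow_pos hp.pos _, pow_pos hp.pos _, by
        have := j.2
        show p ^ (k - 2 * j.1) * (p ^ j.1) ^ 2 = p ^ k
        rw [← pow_mul, ← pow_add]
        congr 1
        omega⟩ : {q : ℕ × ℕ // 0 < q.1 ∧ 0 < q.2 ∧ q.1 * q.2 ^ 2 = p ^ k})) := by
    constructor
    · intro i j h
      have h2 : p ^ i.1 = p ^ j.1 := congrArg (fun t => t.1.2) h
      exact Fin.ext (Nat.pow_right_injective hp.two_le h2)
    · rintro ⟨⟨a, b⟩, ha, hb, hab⟩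
      simp only at ha hb hab
      obtain ⟨i, -, rfl⟩ := (Nat.dvd_prime_pow hp).1 (Dvd.intro _ hab)
      obtain ⟨j, -, rfl⟩ := (Nat.dvd_prime_pow hp).1
        ((dvd_pow_self b two_ne_zero).trans (Dvd.intro_left _ hab))
      rw [← pow_mul, ← pow_add] at hab
      have hk : i + j * 2 = k := Nat.pow_right_injective hp.two_le hab
      refine ⟨⟨j, by omega⟩, ?_⟩
      apply Subtype.ext
      have : k - 2 * j = i := by omega
      simp [this]
  rw [tau12, ← Nat.card_congr (Equiv.ofBijective _ key), Nat.card_fin]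

theorem half_formula (k : ℕ) : ((k / 2 + 1 : ℕ) : ℂ) = (2 * (k : ℂ) + 3 + (-1) ^ k) / 4 := by
  rcases Nat.even_or_odd' k with ⟨m, rfl | rfl⟩
  · have : 2 * m / 2 = m := by omega
    rw [this, pow_mul]
    push_cast
    norm_num
    ring
  · have : (2 * m + 1) / 2 = m := by omega
    rw [this, pow_succ, pow_mul]
    push_cast
    norm_num
    ring

theorem hasSum_prod_aux {f g : ℕ → ℂ} {s t : ℂ} (hf : HasSum f s) (hg : HasSum g t) :
    HasSum (fun q : ℕ × ℕ => f q.1 * g q.2) (s * t) :=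
  hf.mul hg (summable_mul_of_summable_norm hf.summable.norm hg.summable.norm)

/-- For any prime `p` and `|x| < 1`, `|y| < 1`, the series
`∑_{a,b ≥ 0} τ_{1,2}(p^{a+b}) x^a y^b` converges absolutely and equals
`(1 + xy - x²y - xy²)/((1-x)(1-x²)(1-y)(1-y²))`. -/
theorem tsum_tau12_power_series (p : ℕ) (hp : p.Prime) (x y : ℂ)
    (hx : ‖x‖ < 1) (hy : ‖y‖ < 1) :
    Summable (fun q : ℕ × ℕ => ‖(tau12 (p ^ (q.1 + q.2)) : ℂ) * x ^ q.1 * y ^ q.2‖) ∧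
      ∑' q : ℕ × ℕ, (tau12 (p ^ (q.1 + q.2)) : ℂ) * x ^ q.1 * y ^ q.2 =
        (1 + x * y - x ^ 2 * y - x * y ^ 2) /
          ((1 - x) * (1 - x ^ 2) * (1 - y) * (1 - y ^ 2)) := by
  have ne1 : ∀ z : ℂ, ‖z‖ < 1 → 1 - z ≠ 0 := by
    intro z hz h
    rw [← sub_eq_zero.1 h] at hz
    simp at hz
  have hx1 := ne1 x hx
  have hy1 := ne1 y hy
  have hx2 : 1 + x ≠ 0 := by simpa using ne1 (-x) (by simpa using hx)
  have hy2 : 1 + y ≠ 0 := by simpa using ne1 (-y) (by simpa using hy)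
  have gx := hasSum_geometric_of_norm_lt_one hx
  have gy := hasSum_geometric_of_norm_lt_one hy
  have mx := hasSum_geometric_of_norm_lt_one (ξ := -x) (by simpa using hx)
  have my := hasSum_geometric_of_norm_lt_one (ξ := -y) (by simpa using hy)
  have dx := hasSum_coe_mul_geometric_of_norm_lt_one hx
  have dy := hasSum_coe_mul_geometric_of_norm_lt_one hy
  have H := (((((hasSum_prod_aux dx gy).add (hasSum_prod_aux gx dy)).mul_left 2).add
    ((hasSum_prod_aux gx gy).mul_left 3)).add (hasSum_prod_aux mx my)).div_const 4
  have H' : HasSum (fun q : ℕ × ℕ => (tau12 (p ^ (q.1 + q.2)) : ℂ) * x ^ q.1 * y ^ q.2)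
      ((1 + x * y - x ^ 2 * y - x * y ^ 2) /
          ((1 - x) * (1 - x ^ 2) * (1 - y) * (1 - y ^ 2))) := by
    convert H using 1
    · rfl
    · funext q
      rw [tau12_prime_pow p hp, half_formula, neg_pow x, neg_pow y, pow_add]
      push_cast
      ring
    · have e1 : 1 - x ^ 2 = (1 - x) * (1 + x) := by ring
      have e2 : 1 - y ^ 2 = (1 - y) * (1 + y) := by ring
      rw [e1, e2, sub_neg_eq_add, sub_neg_eq_add]
      field_simp
      ring
  exact ⟨H'.summable.norm, H'.tsum_eq⟩
end

section
/- Let k ≥ 1 be an integer and define τ_{1,k}(n) as the number of ordered pairs (a,b) of positive integers with a·b^k = n. Then there exists a function h : ℕ×ℕ → ℂ such that the double series Σ_{m,n ≥ 1} |h(m,n)| · m^{−σ₁} · n^{−σ₂} converges for all real σ₁ > 1/(k+2) and σ₂ > 1/(k+2), and such that for all complex z, w with Re z > 1 and Re w > 1 one has Σ_{m,n ≥ 1} τ_{1,k}(m·n) · m^{−z} · n^{−w} = ζ(z) · ζ(w) · [ Π_{l=0}^{k} ζ(l·z + (k−l)·w) / Π_{l=1}^{k} ζ(l·z + (k+1−l)·w)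 ] · Σ_{m,n ≥ 1} h(m,n) · m^{−z} · n^{−w}. -/
/-- `τ_{1,k}(n)` is the number of ordered pairs `(a,b)` of positive integers with `a·bᵏ = n`. -/
noncomputable def tau1k (k n : ℕ) : ℕ :=
  Nat.card {q : ℕ × ℕ // 0 < q.1 ∧ 0 < q.2 ∧ q.1 * q.2 ^ k = n}

theorem tdd_conv_mul {R : Type*} [CommSemiring R] (W : ℕ × ℕ → R)
    (hW : ∀ a b c d : ℕ, Nat.Coprime (a * b) (c * d) → W (a * c, b * d) = W (a, b) * W (c, d))
    {m n : ℕ} (cop : Nat.Coprime m n) :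
    ∑ q ∈ (m * n).divisorsAntidiagonal, W q =
      (∑ q ∈ m.divisorsAntidiagonal, W q) * ∑ q ∈ n.divisorsAntidiagonal, W q := by
  rw [Finset.sum_mul_sum, ← Finset.sum_product']
  symm
  apply Finset.sum_nbij fun ((i, j), k, l) ↦ (i * k, j * l)
  · rintro ⟨⟨a1, a2⟩, ⟨b1, b2⟩⟩ h
    simp only [Nat.mem_divisorsAntidiagonal, Ne, Finset.mem_product] at h
    rcases h with ⟨⟨rfl, ha⟩, ⟨rfl, hb⟩⟩
    simp only [Nat.mem_divisorsAntidiagonal, mul_eq_zero, Ne]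
    constructor
    · ring
    rw [mul_eq_zero] at *
    exact not_or_intro ha hb
  · simp only [Set.InjOn, Finset.mem_coe, Nat.mem_divisorsAntidiagonal, Finset.mem_product,
      Prod.mk_inj]
    rintro ⟨⟨a1, a2⟩, ⟨b1, b2⟩⟩ ⟨⟨rfl, ha⟩, ⟨rfl, hb⟩⟩ ⟨⟨c1, c2⟩, ⟨d1, d2⟩⟩ hcd h
    ext
    · trans Nat.gcd (a1 * a2) (a1 * b1)
      · rw [Nat.gcd_mul_left, cop.coprime_mul_left.coprime_mul_right_right.gcd_eq_one, mul_one]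
      · rw [← hcd.1.1, ← hcd.2.1] at cop
        rw [← hcd.1.1, h.1, Nat.gcd_mul_left,
          cop.coprime_mul_left.coprime_mul_right_right.gcd_eq_one, mul_one]
    · trans Nat.gcd (a1 * a2) (a2 * b2)
      · rw [mul_comm, Nat.gcd_mul_left, cop.coprime_mul_right.coprime_mul_left_right.gcd_eq_one,
          mul_one]
      · rw [← hcd.1.1, ← hcd.2.1] at cop
        rw [← hcd.1.1, h.2, mul_comm, Nat.gcd_mul_left,
          cop.coprime_mul_right.coprime_mul_left_right.gcd_eq_one, mul_one]
    · trans Nat.gcd (b1 * b2) (a1 * b1)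
      · rw [mul_comm, Nat.gcd_mul_right,
          cop.coprime_mul_right.coprime_mul_left_right.symm.gcd_eq_one, one_mul]
      · rw [← hcd.1.1, ← hcd.2.1] at cop
        rw [← hcd.2.1, h.1, mul_comm c1 d1, Nat.gcd_mul_left,
          cop.coprime_mul_right.coprime_mul_left_right.symm.gcd_eq_one, mul_one]
    · trans Nat.gcd (b1 * b2) (a2 * b2)
      · rw [Nat.gcd_mul_right, cop.coprime_mul_left.coprime_mul_right_right.symm.gcd_eq_one,
          one_mul]
      · rw [← hcd.1.1, ← hcd.2.1] at cop
        rw [← hcd.2.1, h.2, Nat.gcd_mul_right,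
          cop.coprime_mul_left.coprime_mul_right_right.symm.gcd_eq_one, one_mul]
  · simp only [Set.SurjOn, Set.subset_def, Finset.mem_coe, Nat.mem_divisorsAntidiagonal,
      Finset.mem_product, Set.mem_image]
    rintro ⟨b1, b2⟩ h
    use ((b1.gcd m, b2.gcd m), (b1.gcd n, b2.gcd n))
    rw [← cop.gcd_mul _, ← cop.gcd_mul _, ← h.1, Nat.gcd_mul_gcd_of_coprime_of_mul_eq_mul cop h.1,
      Nat.gcd_mul_gcd_of_coprime_of_mul_eq_mul cop.symm _]
    · rw [Ne, mul_eq_zero, not_or] at h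
      simp [h.2.1, h.2.2]
    rw [mul_comm n m, h.1]
  · simp only [Nat.mem_divisorsAntidiagonal, Finset.mem_product]
    rintro ⟨⟨a1, a2⟩, ⟨b1, b2⟩⟩ ⟨⟨rfl, ha⟩, ⟨rfl, hb⟩⟩
    rw [hW _ _ _ _ cop]

theorem tdd_conv_prime_pow {R : Type*} [CommSemiring R] (W : ℕ × ℕ → R) {p : ℕ} (hp : p.Prime)
    (e : ℕ) : ∑ q ∈ (p ^ e).divisorsAntidiagonal, W q =
      ∑ q ∈ Finset.HasAntidiagonal.antidiagonal e, W (p ^ q.1, p ^ q.2) := by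
  symm
  apply Finset.sum_nbij fun q ↦ (p ^ q.1, p ^ q.2)
  · rintro ⟨a, b⟩ h
    simp only [Finset.HasAntidiagonal.mem_antidiagonal] at h
    simp [Nat.mem_divisorsAntidiagonal, ← pow_add, h, hp.ne_zero]
  · rintro ⟨a, b⟩ - ⟨a', b'⟩ - h
    simp only [Prod.mk.injEq] at h
    simp [Nat.pow_right_injective hp.two_le h.1, Nat.pow_right_injective hp.two_le h.2]
  · rintro ⟨a, b⟩ h
    simp only [Finset.mem_coe, Nat.mem_divisorsAntidiagonal] at h
    obtain ⟨i, -, rfl⟩ := (Nat.dvd_prime_pow hp).1 (Dvd.intro _ h.1)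
    obtain ⟨j, -, rfl⟩ := (Nat.dvd_prime_pow hp).1 (Dvd.intro_left _ h.1)
    refine ⟨(i, j), ?_, rfl⟩
    simp only [Finset.mem_coe, Finset.HasAntidiagonal.mem_antidiagonal]
    apply Nat.pow_right_injective hp.two_le
    simpa [pow_add] using h.1
  · intros; rfl

theorem tdd_summable_pairs (W : ℕ × ℕ → ℝ) (h0 : ∀ q, 0 ≤ W q)
    (hz : ∀ q, q.1 * q.2 = 0 → W q = 0)
    (hs : Summable fun N : ℕ => ∑ q ∈ N.divisorsAntidiagonal, W q) : Summable W := by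
  apply summable_of_sum_le (c := ∑' N : ℕ, ∑ q ∈ N.divisorsAntidiagonal, W q) h0
  intro u
  rw [← Finset.sum_fiberwise_of_maps_to (s := u) (t := u.image fun q => q.1 * q.2)
    (g := fun q => q.1 * q.2) (fun q hq => Finset.mem_image_of_mem _ hq)]
  refine le_trans (Finset.sum_le_sum ?_)
    (hs.sum_le_tsum (u.image fun q => q.1 * q.2)
      (fun N _ => Finset.sum_nonneg fun q _ => h0 q))
  intro N _
  by_cases hN : N = 0
  · subst hN
    rw [Finset.sum_eq_zero]
    · simp
    · intro q hq
      exact hz q (Finset.mem_filter.1 hq).2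
  · apply Finset.sum_le_sum_of_subset_of_nonneg
    · intro q hq
      rw [Nat.mem_divisorsAntidiagonal]
      exact ⟨(Finset.mem_filter.1 hq).2, hN⟩
    · intro q _ _
      exact h0 q

theorem tdd_hasSum_pairs (W : ℕ × ℕ → ℂ)
    (hz : ∀ q, q.1 * q.2 = 0 → W q = 0) (hs : Summable W) :
    HasSum (fun N : ℕ => ∑ q ∈ N.divisorsAntidiagonal, W q) (∑' q, W q) := by
  refine (congrArg (fun g => HasSum g (∑' q, W q)) ?_).mpr
    (hs.hasSum.tsum_fiberwise (fun q : ℕ × ℕ => q.1 * q.2))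
  funext N
  by_cases hN : N = 0
  · subst hN
    have : ∀ b : (fun q : ℕ × ℕ => q.1 * q.2) ⁻¹' {0}, W b = 0 := fun b => hz _ b.2
    simp [this]
  · have : (fun q : ℕ × ℕ => q.1 * q.2) ⁻¹' {N} = (N.divisorsAntidiagonal : Set (ℕ × ℕ)) := by
      ext q; simp [Nat.mem_divisorsAntidiagonal, hN]
    rw [this, Finset.tsum_subtype']

theorem tdd_hasSum_antidiagonal (W : ℕ × ℕ → ℂ) (hs : Summable W) :
    HasSum (fun N : ℕ => ∑ q ∈ Finset.HasAntidiagonal.antidiagonal N, W q) (∑' q, W q) := by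
  refine (congrArg (fun g => HasSum g (∑' q, W q)) ?_).mpr
    (hs.hasSum.tsum_fiberwise (fun q : ℕ × ℕ => q.1 + q.2))
  funext N
  have : (fun q : ℕ × ℕ => q.1 + q.2) ⁻¹' {N} = (Finset.HasAntidiagonal.antidiagonal N : Set (ℕ × ℕ)) := by
    ext q; simp
  rw [this, Finset.tsum_subtype']

theorem tdd_hasSum_antidiagonal_real (W : ℕ × ℕ → ℝ) (hs : Summable W) :
    HasSum (fun N : ℕ => ∑ q ∈ Finset.HasAntidiagonal.antidiagonal N, W q) (∑' q, W q) := by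
  refine (congrArg (fun g => HasSum g (∑' q, W q)) ?_).mpr
    (hs.hasSum.tsum_fiberwise (fun q : ℕ × ℕ => q.1 + q.2))
  funext N
  have : (fun q : ℕ × ℕ => q.1 + q.2) ⁻¹' {N} = (Finset.HasAntidiagonal.antidiagonal N : Set (ℕ × ℕ)) := by
    ext q; simp
  rw [this, Finset.tsum_subtype']

theorem tdd_summable_mult (f : ℕ → ℝ) (h0 : ∀ n, 0 ≤ f n) (hz : f 0 = 0) (h1 : f 1 = 1)
    (hmul : ∀ {m n}, Nat.Coprime m n → f (m * n) = f m * f n) (a : ℕ → ℝ) (ha0 : ∀ n, 0 ≤ a n)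
    (ha : Summable a) (hs : ∀ {p : ℕ}, p.Prime → Summable fun n : ℕ => f (p ^ n))
    (hle : ∀ {p : ℕ}, p.Prime → ∑' n : ℕ, f (p ^ n) ≤ 1 + a p) : Summable f := by
  apply summable_of_sum_le (c := Real.exp (∑' n, a n)) h0
  intro u
  obtain ⟨N, hN⟩ := u.exists_nat_subset_range
  obtain ⟨hA, hB⟩ := EulerProduct.summable_and_hasSum_smoothNumbers_prod_primesBelow_tsum h1 hmul
    (fun hp => by simpa only [Real.norm_of_nonneg (h0 _)] using hs hp) N
  have h2 : ∑ n ∈ u, f n ≤ ∏ p ∈ N.primesBelow, ∑' n : ℕ, f (p ^ n) := by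
    rw [← hB.tsum_eq]
    have hB' : Summable ((N.smoothNumbers).indicator f) := by
      rw [← summable_subtype_iff_indicator]; exact hB.summable
    rw [tsum_subtype]
    refine le_trans (le_of_eq ?_) (hB'.sum_le_tsum u
      (fun n _ => Set.indicator_nonneg (fun _ _ => h0 _) _))
    apply Finset.sum_congr rfl
    intro n hn
    by_cases hn0 : n = 0
    · subst hn0
      rw [hz, Set.indicator_apply]; simp [hz]
    · rw [Set.indicator_of_mem]
      exact Nat.mem_smoothNumbers_of_lt (Nat.pos_of_ne_zero hn0) (Finset.mem_range.1 (hN hn))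
  refine h2.trans ?_
  calc _ ≤ ∏ p ∈ N.primesBelow, Real.exp (a p) := by
        apply Finset.prod_le_prod
        · intro p _; exact tsum_nonneg fun n => h0 _
        · intro p hp
          have := hle (Nat.prime_of_mem_primesBelow hp)
          linarith [Real.add_one_le_exp (a p)]
    _ = Real.exp (∑ p ∈ N.primesBelow, a p) := (Real.exp_sum _ _).symm
    _ ≤ _ := Real.exp_le_exp.2 (ha.sum_le_tsum _ fun n _ => ha0 n)

/-- The multiplicative function of two variables with local values `c`. -/
noncomputable def tddH (c : ℕ → ℕ → ℂ) (q : ℕ × ℕ) : ℂ :=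
  if q.1 * q.2 = 0 then 0
  else ∏ p ∈ (q.1 * q.2).primeFactors, c (q.1.factorization p) (q.2.factorization p)

theorem tddH_zero (c : ℕ → ℕ → ℂ) (q : ℕ × ℕ) (h : q.1 * q.2 = 0) : tddH c q = 0 := by
  unfold tddH; rw [if_pos h]

theorem tddH_mul (f : ℕ → ℕ → ℂ) (a b c d : ℕ) (h : Nat.Coprime (a * b) (c * d)) :
    tddH f (a * c, b * d) = tddH f (a, b) * tddH f (c, d) := by
  unfold tddH
  have e : a * c * (b * d) = (a * b) * (c * d) := by ring
  simp only [e]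
  by_cases h1 : a * b = 0
  · simp [h1]
  by_cases h2 : c * d = 0
  · simp [h2]
  rw [if_neg (mul_ne_zero h1 h2), if_neg h1, if_neg h2, h.primeFactors_mul,
    Finset.prod_union h.disjoint_primeFactors]
  obtain ⟨ha, hb⟩ := mul_ne_zero_iff.1 h1
  obtain ⟨hc, hd⟩ := mul_ne_zero_iff.1 h2
  have key : ∀ p, p.Prime → p ∣ a * b → ¬ p ∣ c * d := fun p hp h3 h4 =>
    hp.one_lt.ne' (Nat.eq_one_of_dvd_coprimes h h3 h4)
  congr 1
  · apply Finset.prod_congr rfl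
    intro p hp
    have hk := key p (Nat.prime_of_mem_primeFactors hp) (Nat.dvd_of_mem_primeFactors hp)
    rw [Nat.factorization_mul ha hc, Nat.factorization_mul hb hd]
    simp [Nat.factorization_eq_zero_of_not_dvd fun h => hk (Dvd.dvd.mul_right h d),
      Nat.factorization_eq_zero_of_not_dvd fun h => hk (Dvd.dvd.mul_left h c)]
  · apply Finset.prod_congr rfl
    intro p hp
    have hk := fun hh => key p (Nat.prime_of_mem_primeFactors hp) hh (Nat.dvd_of_mem_primeFactors hp)
    rw [Nat.factorization_mul ha hc, Nat.factorization_mul hb hd]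
    simp [Nat.factorization_eq_zero_of_not_dvd fun h => hk (Dvd.dvd.mul_right h b),
      Nat.factorization_eq_zero_of_not_dvd fun h => hk (Dvd.dvd.mul_left h a)]

theorem tddH_prime_pow (c : ℕ → ℕ → ℂ) (h00 : c 0 0 = 1) {p : ℕ} (hp : p.Prime) (i j : ℕ) :
    tddH c (p ^ i, p ^ j) = c i j := by
  unfold tddH
  have hne : p ^ i * p ^ j ≠ 0 := mul_ne_zero (pow_ne_zero _ hp.ne_zero) (pow_ne_zero _ hp.ne_zero)
  rw [if_neg hne]
  simp only [← pow_add]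
  by_cases hij : i + j = 0
  · obtain ⟨rfl, rfl⟩ : i = 0 ∧ j = 0 := by omega
    simp [h00]
  · rw [Nat.primeFactors_prime_pow hij hp]
    simp [hp.factorization_self]

theorem tdd_local (c : ℕ → ℕ → ℂ) (h00 : c 0 0 = 1) (M : ℕ)
    (hv : ∀ i j, 0 < i + j → i + j < M → c i j = 0)
    (hs : ∀ r : ℝ, 0 ≤ r → r < 1 → Summable fun q : ℕ × ℕ => ‖c q.1 q.2‖ * r ^ (q.1 + q.2))
    {x y t r : ℝ} (hx : 0 ≤ x) (hy : 0 ≤ y) (hxt : x ≤ t) (hyt : y ≤ t) (htr : t ≤ r) (hr0 : 0 < r)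
    (hr : r < 1) :
    Summable (fun q : ℕ × ℕ => ‖c q.1 q.2‖ * x ^ q.1 * y ^ q.2) ∧
    ∑' q : ℕ × ℕ, ‖c q.1 q.2‖ * x ^ q.1 * y ^ q.2 ≤
      1 + t ^ M * ((∑' q : ℕ × ℕ, ‖c q.1 q.2‖ * r ^ (q.1 + q.2)) / r ^ M) := by
  have ht : 0 ≤ t := hx.trans hxt
  have h1 : ∀ q : ℕ × ℕ, ‖c q.1 q.2‖ * x ^ q.1 * y ^ q.2 ≤ ‖c q.1 q.2‖ * t ^ (q.1 + q.2) := by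
    intro q
    rw [pow_add, mul_assoc]
    gcongr
  have hS : Summable (fun q : ℕ × ℕ => ‖c q.1 q.2‖ * x ^ q.1 * y ^ q.2) :=
    Summable.of_nonneg_of_le (fun q => by positivity) h1 (hs t ht (htr.trans_lt hr))
  refine ⟨hS, ?_⟩
  have hd : HasSum (fun q : ℕ × ℕ => if q = (0, 0) then (1 : ℝ) else 0) 1 :=
    hasSum_ite_eq _ _
  have hR := ((hs r hr0.le hr).hasSum.div_const (r ^ M)).mul_left (t ^ M)
  refine hasSum_le ?_ hS.hasSum (hd.add hR)
  rintro ⟨i, j⟩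
  by_cases h0 : i + j = 0
  · obtain ⟨rfl, rfl⟩ : i = 0 ∧ j = 0 := by omega
    simp [h00]
    positivity
  · have hne : (i, j) ≠ (0, 0) := by
      intro h; simp only [Prod.mk.injEq] at h; omega
    rw [if_neg hne, zero_add]
    by_cases hM : i + j < M
    · simp [hv i j (Nat.pos_of_ne_zero h0) hM]
    · obtain ⟨m, hm⟩ := Nat.exists_eq_add_of_le (not_lt.1 hM)
      refine (h1 (i, j)).trans ?_
      simp only [hm]
      have : t ^ M * (‖c i j‖ * r ^ (M + m) / r ^ M) = ‖c i j‖ * (t ^ M * r ^ m) := by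
        rw [pow_add]; field_simp
      rw [this, pow_add]
      gcongr

theorem tdd_real_summable (c : ℕ → ℕ → ℂ) (h00 : c 0 0 = 1) (M : ℕ)
    (hv : ∀ i j, 0 < i + j → i + j < M → c i j = 0)
    (hs : ∀ r : ℝ, 0 ≤ r → r < 1 → Summable fun q : ℕ × ℕ => ‖c q.1 q.2‖ * r ^ (q.1 + q.2))
    (σ₁ σ₂ : ℝ) (h1 : 1 < M * σ₁) (h2 : 1 < M * σ₂) :
    Summable fun q : ℕ × ℕ => ‖tddH c q‖ * (q.1 : ℝ) ^ (-σ₁) * (q.2 : ℝ) ^ (-σ₂) := by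
  set W : ℕ × ℕ → ℝ := fun q => ‖tddH c q‖ * (q.1 : ℝ) ^ (-σ₁) * (q.2 : ℝ) ^ (-σ₂) with hWdef
  have hW0 : ∀ q, 0 ≤ W q := fun q => by positivity
  have hWz : ∀ q : ℕ × ℕ, q.1 * q.2 = 0 → W q = 0 := fun q hq => by
    simp [hWdef, tddH_zero c q hq]
  have hWm : ∀ a b c d : ℕ, Nat.Coprime (a * b) (c * d) →
      W (a * c, b * d) = W (a, b) * W (c, d) := by
    intro a b c d h
    simp only [hWdef]
    rw [tddH_mul _ _ _ _ _ h, norm_mul, Nat.cast_mul, Nat.cast_mul,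
      Real.mul_rpow (by positivity) (by positivity), Real.mul_rpow (by positivity) (by positivity)]
    ring
  apply tdd_summable_pairs W hW0 hWz
  set σ := min σ₁ σ₂ with hσ
  have hσM : 1 < M * σ := by
    rcases min_choice σ₁ σ₂ with h | h <;> rw [hσ, h] <;> assumption
  have hσ0 : 0 < σ := by
    by_contra h
    have : (M : ℝ) * σ ≤ 0 := mul_nonpos_of_nonneg_of_nonpos (by positivity) (not_lt.1 h)
    linarith
  set r : ℝ := (2 : ℝ) ^ (-σ) with hr
  have hr0 : 0 < r := by positivity
  have hr1 : r < 1 := Real.rpow_lt_one_of_one_lt_of_neg (by norm_num) (by linarith)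
  set K : ℝ := (∑' q : ℕ × ℕ, ‖c q.1 q.2‖ * r ^ (q.1 + q.2)) / r ^ M with hK
  have hK0 : 0 ≤ K := div_nonneg (tsum_nonneg fun q => by positivity) (by positivity)
  have hpp : ∀ {p : ℕ}, p.Prime → ∀ e : ℕ, ∑ q ∈ (p ^ e).divisorsAntidiagonal, W q =
      ∑ q ∈ Finset.HasAntidiagonal.antidiagonal e,
        ‖c q.1 q.2‖ * ((p : ℝ) ^ (-σ₁)) ^ q.1 * ((p : ℝ) ^ (-σ₂)) ^ q.2 := by
    intro p hp e
    rw [tdd_conv_prime_pow W hp]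
    apply Finset.sum_congr rfl
    intro q _
    simp only [hWdef]
    rw [tddH_prime_pow c h00 hp, Nat.cast_pow, Nat.cast_pow, Real.rpow_pow_comm (by positivity),
      Real.rpow_pow_comm (by positivity)]
  have hloc : ∀ {p : ℕ}, p.Prime → _ := fun {p : ℕ} (hp : p.Prime) =>
    tdd_local c h00 M hv hs (x := (p : ℝ) ^ (-σ₁)) (y := (p : ℝ) ^ (-σ₂)) (t := (p : ℝ) ^ (-σ))
      (r := r) (by positivity) (by positivity)
      (Real.rpow_le_rpow_of_exponent_le (by exact_mod_cast hp.one_lt.le)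
        (neg_le_neg (min_le_left _ _)))
      (Real.rpow_le_rpow_of_exponent_le (by exact_mod_cast hp.one_lt.le)
        (neg_le_neg (min_le_right _ _)))
      (Real.rpow_le_rpow_of_nonpos (by norm_num) (by exact_mod_cast hp.two_le) (by linarith))
      hr0 hr1
  apply tdd_summable_mult _ (fun n => Finset.sum_nonneg fun q _ => hW0 q) (by simp)
    (by simp [hWdef, tddH]) (fun h => tdd_conv_mul W hWm h)
    (fun p => ((p : ℝ) ^ (-σ)) ^ M * K) (fun n => by positivity)
  · apply Summable.mul_right
    have : Summable fun n : ℕ => (n : ℝ) ^ (-(M * σ)) := Real.summable_nat_rpow.2 (by linarith)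
    refine this.congr fun n => ?_
    rw [← Real.rpow_natCast, ← Real.rpow_mul (by positivity)]
    congr 1; ring
  · intro p hp
    simp only [hpp hp]
    exact (tdd_hasSum_antidiagonal_real _ (hloc hp).1).summable
  · intro p hp
    simp only [hpp hp]
    rw [(tdd_hasSum_antidiagonal_real _ (hloc hp).1).tsum_eq]
    exact (hloc hp).2

theorem tdd_hasProd (c : ℕ → ℕ → ℂ) (h00 : c 0 0 = 1) (M : ℕ)
    (hv : ∀ i j, 0 < i + j → i + j < M → c i j = 0)
    (hs : ∀ r : ℝ, 0 ≤ r → r < 1 → Summable fun q : ℕ × ℕ => ‖c q.1 q.2‖ * r ^ (q.1 + q.2))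
    (z w : ℂ) (hz0 : 0 < z.re) (hw0 : 0 < w.re) (h1 : 1 < M * z.re) (h2 : 1 < M * w.re) :
    HasProd (fun p : Nat.Primes =>
      ∑' q : ℕ × ℕ, c q.1 q.2 * ((p : ℂ) ^ (-z)) ^ q.1 * ((p : ℂ) ^ (-w)) ^ q.2)
      (∑' q : ℕ × ℕ, tddH c q * (q.1 : ℂ) ^ (-z) * (q.2 : ℂ) ^ (-w)) := by
  set W : ℕ × ℕ → ℂ := fun q => tddH c q * (q.1 : ℂ) ^ (-z) * (q.2 : ℂ) ^ (-w) with hWdef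
  have hWz : ∀ q : ℕ × ℕ, q.1 * q.2 = 0 → W q = 0 := fun q hq => by
    simp [hWdef, tddH_zero c q hq]
  have hWm : ∀ a b c d : ℕ, Nat.Coprime (a * b) (c * d) →
      W (a * c, b * d) = W (a, b) * W (c, d) := by
    intro a b c d h
    simp only [hWdef]
    rw [tddH_mul _ _ _ _ _ h, Nat.cast_mul, Nat.cast_mul,
      Complex.natCast_mul_natCast_cpow, Complex.natCast_mul_natCast_cpow]
    ring
  have hWn : Summable fun q => ‖W q‖ := by
    refine (tdd_real_summable c h00 M hv hs z.re w.re h1 h2).congr fun q => ?_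
    simp only [hWdef, norm_mul]
    by_cases hq : q.1 * q.2 = 0
    · simp [tddH, hq]
    · obtain ⟨ha, hb⟩ := mul_ne_zero_iff.1 hq
      rw [Complex.norm_natCast_cpow_of_pos (Nat.pos_of_ne_zero ha),
        Complex.norm_natCast_cpow_of_pos (Nat.pos_of_ne_zero hb)]
      simp
  have hN := tdd_hasSum_pairs W hWz hWn.of_norm
  have hNn : Summable fun N : ℕ => ‖∑ q ∈ N.divisorsAntidiagonal, W q‖ := by
    have hx : Summable fun q => ((‖W q‖ : ℝ) : ℂ) := by exact_mod_cast hWn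
    have := (tdd_hasSum_pairs (fun q => ((‖W q‖ : ℝ) : ℂ))
      (fun q hq => by simp [hWz q hq]) hx).summable
    have h3 : Summable fun N : ℕ => ∑ q ∈ N.divisorsAntidiagonal, ‖W q‖ := by
      exact_mod_cast this
    exact h3.of_nonneg_of_le (fun _ => norm_nonneg _) fun _ => norm_sum_le _ _
  have hE := EulerProduct.eulerProduct_hasProd (f := fun N : ℕ => ∑ q ∈ N.divisorsAntidiagonal, W q)
    (by simp [hWdef, tddH]) (fun h => tdd_conv_mul W hWm h) hNn (by simp)
  rw [hN.tsum_eq] at hE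
  refine (congrArg (fun g => HasProd g (∑' q, W q)) ?_).mpr hE
  funext p
  have hp := p.2
  have hpp : ∀ e : ℕ, ∑ q ∈ ((p : ℕ) ^ e).divisorsAntidiagonal, W q =
      ∑ q ∈ Finset.HasAntidiagonal.antidiagonal e,
        c q.1 q.2 * ((p : ℂ) ^ (-z)) ^ q.1 * ((p : ℂ) ^ (-w)) ^ q.2 := by
    intro e
    rw [tdd_conv_prime_pow W hp]
    apply Finset.sum_congr rfl
    intro q _
    simp only [hWdef]
    rw [tddH_prime_pow c h00 hp, Nat.cast_pow, Nat.cast_pow, ← Complex.natCast_cpow_natCast_mul,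
      ← Complex.natCast_cpow_natCast_mul, Complex.cpow_nat_mul, Complex.cpow_nat_mul]
  simp only [hpp]
  refine (tdd_hasSum_antidiagonal _ ?_).tsum_eq.symm
  have hn : ∀ s : ℂ, 0 < s.re → ‖(p : ℂ) ^ (-s)‖ < 1 := by
    intro s hs
    rw [Complex.norm_natCast_cpow_of_pos hp.pos]
    exact Real.rpow_lt_one_of_one_lt_of_neg (by exact_mod_cast hp.one_lt) (by simpa using hs)
  set t := max ‖(p : ℂ) ^ (-z)‖ ‖(p : ℂ) ^ (-w)‖ with ht
  have ht0 : 0 ≤ t := (norm_nonneg _).trans (le_max_left _ _)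
  have ht1 : t < 1 := max_lt (hn z hz0) (hn w hw0)
  apply Summable.of_norm_bounded (hs t ht0 ht1)
  intro q
  rw [norm_mul, norm_mul, norm_pow, norm_pow, pow_add, mul_assoc]
  gcongr
  · exact le_max_left _ _
  · exact le_max_right _ _

open Classical in
theorem tdd_tau_eq (k : ℕ) (hk : 1 ≤ k) (n : ℕ) :
    tau1k k n = ∑ q ∈ n.divisorsAntidiagonal, (if ∃ b : ℕ, b ^ k = q.2 then 1 else 0) := by
  rw [Finset.sum_boole, Nat.cast_id, ← Set.ncard_coe_finset,
    ← Nat.card_coe_set_eq, tau1k]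
  refine Nat.card_congr (Equiv.ofBijective
    (fun q => ⟨(q.1.1, q.1.2 ^ k), ?_⟩) ⟨?_, ?_⟩)
  · obtain ⟨⟨a, b⟩, ha, hb, h⟩ := q
    simp only at ha hb h
    simp only [Finset.coe_filter, Nat.mem_divisorsAntidiagonal, Set.mem_ofPred_eq]
    exact ⟨⟨h, by rw [← h]; positivity⟩, b, rfl⟩
  · rintro ⟨⟨a, b⟩, h⟩ ⟨⟨a', b'⟩, h'⟩ hh
    simp only [Subtype.mk.injEq, Prod.mk.injEq] at hh
    simp only [Subtype.mk.injEq, Prod.mk.injEq]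
    exact ⟨hh.1, Nat.pow_left_injective (by omega) hh.2⟩
  · rintro ⟨⟨a, d⟩, h⟩
    simp only [Finset.coe_filter, Nat.mem_divisorsAntidiagonal, Set.mem_ofPred_eq] at h
    obtain ⟨⟨h1, h2⟩, b, rfl⟩ := h
    refine ⟨⟨(a, b), ?_, ?_, h1⟩, rfl⟩
    · rw [Nat.pos_iff_ne_zero]; rintro rfl; simp at h1; exact h2 h1.symm
    · rw [Nat.pos_iff_ne_zero]; rintro rfl
      simp only [zero_pow (by omega : k ≠ 0), mul_zero] at h1
      exact h2 h1.symm

theorem tdd_tau_mul (k : ℕ) (hk : 1 ≤ k) {m n : ℕ} (h : Nat.Coprime m n) :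
    tau1k k (m * n) = tau1k k m * tau1k k n := by
  classical
  simp only [tdd_tau_eq k hk]
  apply tdd_conv_mul (fun q : ℕ × ℕ => if ∃ b : ℕ, b ^ k = q.2 then 1 else 0) _ h
  intro a b c d hc
  have hbd : Nat.Coprime b d := hc.coprime_mul_left.coprime_mul_left_right
  have : (∃ e : ℕ, e ^ k = b * d) ↔ (∃ e : ℕ, e ^ k = b) ∧ (∃ e : ℕ, e ^ k = d) := by
    constructor
    · rintro ⟨e, he⟩
      constructor
      · obtain ⟨f, hf⟩ := exists_eq_pow_of_mul_eq_pow (a := b) (b := d) (c := e) (k := k)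
          (by rw [Nat.isUnit_iff]; exact hbd) he.symm
        exact ⟨f, hf.symm⟩
      · obtain ⟨f, hf⟩ := exists_eq_pow_of_mul_eq_pow (a := d) (b := b) (c := e) (k := k)
          (by rw [Nat.isUnit_iff]; exact hbd.symm) (by rw [mul_comm]; exact he.symm)
        exact ⟨f, hf.symm⟩
    · rintro ⟨⟨e, rfl⟩, ⟨f, rfl⟩⟩
      exact ⟨e * f, mul_pow _ _ _⟩
  simp only [this]
  split_ifs <;> simp_all

theorem tdd_tau_prime_pow (k : ℕ) (hk : 1 ≤ k) {p : ℕ} (hp : p.Prime) (e : ℕ) :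
    tau1k k (p ^ e) = e / k + 1 := by
  classical
  rw [tdd_tau_eq k hk, tdd_conv_prime_pow _ hp]
  have : ∀ j : ℕ, (∃ b : ℕ, b ^ k = p ^ j) ↔ k ∣ j := by
    intro j
    constructor
    · rintro ⟨b, hb⟩
      obtain ⟨i, -, rfl⟩ := (Nat.dvd_prime_pow hp).1 ((dvd_pow_self b (by omega : k ≠ 0)).trans hb.dvd)
      rw [← pow_mul] at hb
      exact Dvd.intro_left _ (Nat.pow_right_injective hp.two_le hb)
    · rintro ⟨i, rfl⟩
      exact ⟨p ^ i, by rw [← pow_mul, mul_comm]⟩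
  simp only [this]
  rw [← Finset.Nat.sum_antidiagonal_swap]
  simp only [Prod.snd_swap]
  induction e with
  | zero =>
    rw [Finset.Nat.antidiagonal_zero, Finset.sum_singleton]
    simp
  | succ e ih =>
    rw [Finset.Nat.sum_antidiagonal_succ', ih, Nat.succ_div]
    simp only
    ring

theorem tdd_tau_zero (k : ℕ) (hk : 1 ≤ k) : tau1k k 0 = 0 := by
  rw [tdd_tau_eq k hk]; simp

theorem tdd_tau_eq_tddH (k : ℕ) (hk : 1 ≤ k) (q : ℕ × ℕ) :
    (tau1k k (q.1 * q.2) : ℂ) = tddH (fun i j => (((i + j) / k + 1 : ℕ) : ℂ)) q := by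
  by_cases h : q.1 * q.2 = 0
  · rw [h, tddH_zero _ _ h, tdd_tau_zero k hk, Nat.cast_zero]
  · have h1 : tau1k k 1 = 1 := by simpa using tdd_tau_prime_pow k hk Nat.prime_two 0
    rw [Nat.multiplicative_factorization (tau1k k) (fun _ _ h => tdd_tau_mul k hk h) h1 h, tddH,
      if_neg h, Finsupp.prod, Nat.support_factorization, Nat.cast_prod]
    apply Finset.prod_congr rfl
    intro p hp
    obtain ⟨ha, hb⟩ := mul_ne_zero_iff.1 h
    rw [tdd_tau_prime_pow k hk (Nat.prime_of_mem_primeFactors hp), Nat.factorization_mul ha hb]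
    rfl

/-- Complete homogeneous sums (shifted). -/
def tddG (x y : ℂ) : ℕ → ℂ
  | 0 => 0
  | n + 1 => x ^ n + y * tddG x y n

theorem tddG_eq (x y : ℂ) (n : ℕ) :
    tddG x y (n + 1) = ∑ q ∈ Finset.HasAntidiagonal.antidiagonal n, x ^ q.1 * y ^ q.2 := by
  induction n with
  | zero => simp [tddG]
  | succ n ih =>
    rw [Finset.Nat.sum_antidiagonal_succ', tddG, ih, Finset.mul_sum]
    simp only [pow_zero, mul_one]
    congr 1
    apply Finset.sum_congr rfl
    intro q _; ring

theorem tddG_range (x y : ℂ) (n : ℕ) :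
    tddG x y n = ∑ l ∈ Finset.range n, x ^ l * y ^ (n - 1 - l) := by
  induction n with
  | zero => simp [tddG]
  | succ n ih =>
    rw [Nat.add_sub_cancel, geom_sum₂_succ_eq, tddG, ih]

theorem tddG_add (x y : ℂ) (m n : ℕ) :
    tddG x y (m + n) = x ^ n * tddG x y m + y ^ m * tddG x y n := by
  induction m with
  | zero => simp [tddG]
  | succ m ih =>
    rw [show m + 1 + n = (m + n) + 1 by ring, tddG, ih, tddG]; ring

theorem tddG_mul (x y : ℂ) (k r : ℕ) :
    tddG x y (k * r) = tddG x y k * tddG (x ^ k) (y ^ k) r := by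
  induction r with
  | zero => simp [tddG]
  | succ r ih =>
    rw [mul_add, mul_one, add_comm, tddG_add, ih, tddG, ← pow_mul]; ring

theorem tddG_summable {x y : ℂ} (hx : ‖x‖ < 1) (hy : ‖y‖ < 1) :
    (Summable fun n => ‖tddG x y (n + 1)‖) ∧
      HasSum (fun n => tddG x y (n + 1)) ((1 - x)⁻¹ * (1 - y)⁻¹) := by
  have hxs := summable_norm_geometric_of_norm_lt_one hx
  have hys := summable_norm_geometric_of_norm_lt_one hy
  have h1 := summable_norm_sum_mul_antidiagonal_of_summable_norm hxs hys
  have h2 := tsum_mul_tsum_eq_tsum_sum_antidiagonal_of_summable_norm hxs hys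
  simp only [← tddG_eq] at h1 h2
  refine ⟨h1, ?_⟩
  rw [← tsum_geometric_of_norm_lt_one hx, ← tsum_geometric_of_norm_lt_one hy, h2]
  exact h1.of_norm.hasSum

theorem tdd_tau_summable (k : ℕ) (r : ℝ) (hr0 : 0 ≤ r) (hr : r < 1) :
    Summable fun q : ℕ × ℕ => ‖(((q.1 + q.2) / k + 1 : ℕ) : ℂ)‖ * r ^ (q.1 + q.2) := by
  have h1 : Summable fun n : ℕ => ((n : ℝ) + 1) * r ^ n := by
    have a := summable_pow_mul_geometric_of_norm_lt_one (R := ℝ) 1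
      (by rwa [Real.norm_of_nonneg hr0] : ‖r‖ < 1)
    have b := summable_geometric_of_lt_one hr0 hr
    refine (a.add b).congr fun n => ?_
    ring
  have h2 := h1.mul_of_nonneg h1 (fun n => by positivity) (fun n => by positivity)
  refine Summable.of_nonneg_of_le (fun q => by positivity) (fun q => ?_) h2
  rw [Complex.norm_natCast]
  have : (((q.1 + q.2) / k + 1 : ℕ) : ℝ) ≤ ((q.1 : ℝ) + 1) * ((q.2 : ℝ) + 1) := by
    have h3 : (q.1 + q.2) / k + 1 ≤ (q.1 + 1) * (q.2 + 1) := by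
      have := Nat.div_le_self (q.1 + q.2) k
      nlinarith [Nat.zero_le (q.1 * q.2)]
    exact_mod_cast h3
  calc _ ≤ ((q.1 : ℝ) + 1) * ((q.2 : ℝ) + 1) * r ^ (q.1 + q.2) := by gcongr
    _ = _ := by rw [pow_add]; ring


theorem tdd_fiber (k : ℕ) (hk : 1 ≤ k) (x y : ℂ) (n : ℕ) :
    (∑' b : (fun q : ℕ × ℕ => q.2 + k * q.1) ⁻¹' {n},
      ((x ^ k) ^ b.1.1 * tddG x y (b.1.2 + 1) +
        tddG x y k * (tddG (x ^ k) (y ^ k) b.1.1 * y ^ (b.1.2 + 1)))) =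
      ∑ q ∈ Finset.HasAntidiagonal.antidiagonal n,
        (((q.1 + q.2) / k + 1 : ℕ) : ℂ) * x ^ q.1 * y ^ q.2 := by
  have h1 : ∀ b : (fun q : ℕ × ℕ => q.2 + k * q.1) ⁻¹' {n},
      ((x ^ k) ^ b.1.1 * tddG x y (b.1.2 + 1) +
      tddG x y k * (tddG (x ^ k) (y ^ k) b.1.1 * y ^ (b.1.2 + 1))) = tddG x y (n + 1) := by
    rintro ⟨⟨r, m⟩, hb⟩
    simp only [Set.mem_preimage, Set.mem_singleton_iff] at hb
    subst hb
    simp only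
    rw [show m + k * r + 1 = (m + 1) + k * r by ring, tddG_add x y (m + 1) (k * r), tddG_mul, pow_mul]
    ring
  have h2 : (fun q : ℕ × ℕ => q.2 + k * q.1) ⁻¹' {n} =
      ((Finset.range (n / k + 1)).image fun r => (r, n - k * r) : Finset (ℕ × ℕ)) := by
    ext ⟨r, m⟩
    simp only [Set.mem_preimage, Set.mem_singleton_iff, Finset.coe_image, Set.mem_image,
      Finset.mem_coe, Finset.mem_range, Prod.mk.injEq]
    constructor
    · intro h
      refine ⟨r, ?_, rfl, by omega⟩
      rw [Nat.lt_succ_iff, Nat.le_div_iff_mul_le (by omega), mul_comm]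
      omega
    · rintro ⟨r', h, rfl, rfl⟩
      rw [Nat.lt_succ_iff, Nat.le_div_iff_mul_le (by omega), mul_comm] at h
      omega
  simp only [h1]
  rw [h2, Finset.tsum_subtype' _ (fun _ => tddG x y (n + 1)), Finset.sum_const, Finset.card_image_of_injective _
    (fun a b h => (Prod.mk.inj h).1), Finset.card_range, tddG_eq, nsmul_eq_mul, Finset.mul_sum]
  apply Finset.sum_congr rfl
  intro q hq
  rw [Finset.HasAntidiagonal.mem_antidiagonal.1 hq, mul_assoc]

theorem tdd_e1 (k : ℕ) (hk : 1 ≤ k) (x y : ℂ) :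
    y * tddG x y k = y ^ k + ∑ l ∈ Finset.Icc 1 (k - 1), x ^ l * y ^ (k - l) := by
  obtain ⟨j, rfl⟩ : ∃ j, k = j + 1 := ⟨k - 1, by omega⟩
  rw [tddG_range, Finset.mul_sum, Finset.sum_range_succ', add_comm, Finset.range_eq_Ico,
    Finset.sum_Ico_add' (fun l => y * (x ^ l * y ^ (j + 1 - 1 - l))) 0 j 1]
  congr 1
  · simp [pow_succ']
  · apply Finset.sum_congr
    · ext l; simp
    · intro l hl
      simp only [Finset.mem_Icc] at hl
      rw [show j + 1 - l = (j + 1 - 1 - l) + 1 by omega, pow_succ]; ring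

theorem tdd_e2 (k : ℕ) (x y : ℂ) :
    x * y * tddG x y k = ∑ l ∈ Finset.Icc 1 k, x ^ l * y ^ (k + 1 - l) := by
  rw [tddG_range, Finset.mul_sum, Finset.range_eq_Ico]
  have := Finset.sum_Ico_add' (fun l => x ^ l * y ^ (k + 1 - l)) 0 k 1
  rw [show Finset.Icc 1 k = Finset.Ico (0 + 1) (k + 1) by ext l; simp, ← this]
  apply Finset.sum_congr rfl
  intro l hl
  simp only [Finset.mem_Ico] at hl
  rw [show k + 1 - (l + 1) = (k - 1 - l) + 1 by omega]; ring

theorem tdd_alg (x y X Y G : ℂ) (n1 : 1 - x ≠ 0) (n2 : 1 - y ≠ 0) (n3 : 1 - X ≠ 0)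
    (n4 : 1 - Y ≠ 0) :
    ((1 - X)⁻¹ * ((1 - x)⁻¹ * (1 - y)⁻¹) + G * ((1 - X)⁻¹ * (1 - Y)⁻¹ * (y * (1 - y)⁻¹))) *
      ((1 - x) * (1 - y) * (1 - X) * (1 - Y)) = 1 + (y * G - Y) - x * y * G := by
  field_simp
  ring

theorem tdd_prod {f g : ℕ → ℂ} {a b : ℂ} (hf : HasSum f a) (hg : HasSum g b)
    (hfn : Summable fun n => ‖f n‖) (hgn : Summable fun n => ‖g n‖) :
    HasSum (fun q : ℕ × ℕ => f q.1 * g q.2) (a * b) := by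
  have h : Summable fun q : ℕ × ℕ => f q.1 * g q.2 := by
    apply summable_mul_of_summable_norm hfn hgn
  rw [← hf.tsum_eq, ← hg.tsum_eq, tsum_mul_tsum_of_summable_norm hfn hgn]
  exact h.hasSum

theorem tdd_T (k : ℕ) (hk : 1 ≤ k) {x y : ℂ} (hx : ‖x‖ < 1) (hy : ‖y‖ < 1) :
    (∑' q : ℕ × ℕ, (((q.1 + q.2) / k + 1 : ℕ) : ℂ) * x ^ q.1 * y ^ q.2) *
      ((1 - x) * (1 - y) * (1 - x ^ k) * (1 - y ^ k)) =
    1 + ∑ l ∈ Finset.Icc 1 (k - 1), x ^ l * y ^ (k - l)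
      - ∑ l ∈ Finset.Icc 1 k, x ^ l * y ^ (k + 1 - l) := by
  have hk0 : k ≠ 0 := by omega
  have hxk : ‖x ^ k‖ < 1 := by rw [norm_pow]; exact pow_lt_one₀ (norm_nonneg _) hx hk0
  have hyk : ‖y ^ k‖ < 1 := by rw [norm_pow]; exact pow_lt_one₀ (norm_nonneg _) hy hk0
  have ne : ∀ u : ℂ, ‖u‖ < 1 → 1 - u ≠ 0 := by
    intro u hu h
    rw [← sub_eq_zero.1 h] at hu; simp at hu
  obtain ⟨g1, g2⟩ := tddG_summable hx hy
  obtain ⟨g3, g4⟩ := tddG_summable hxk hyk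
  have g3' : Summable fun n => ‖tddG (x ^ k) (y ^ k) n‖ :=
    (summable_nat_add_iff (f := fun n => ‖tddG (x ^ k) (y ^ k) n‖) 1).1 g3
  have g4' : HasSum (fun n => tddG (x ^ k) (y ^ k) n) ((1 - x ^ k)⁻¹ * (1 - y ^ k)⁻¹) := by
    have := (hasSum_nat_add_iff 1).1 g4
    simpa [tddG] using this
  have hA := tdd_prod (hasSum_geometric_of_norm_lt_one hxk) g2
    (summable_norm_geometric_of_norm_lt_one hxk) g1
  have hys : Summable fun n => ‖y ^ (n + 1)‖ :=
    (summable_nat_add_iff (f := fun n => ‖y ^ n‖) 1).2 (summable_norm_geometric_of_norm_lt_one hy)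
  have hyh : HasSum (fun n => y ^ (n + 1)) (y * (1 - y)⁻¹) := by
    simpa [pow_succ'] using (hasSum_geometric_of_norm_lt_one hy).mul_left y
  have hB := (tdd_prod g4' hyh g3' hys).mul_left (tddG x y k)
  have hC := hA.add hB
  have hD := hC.tsum_fiberwise (fun q : ℕ × ℕ => q.2 + k * q.1)
  have hS : Summable fun q : ℕ × ℕ => (((q.1 + q.2) / k + 1 : ℕ) : ℂ) * x ^ q.1 * y ^ q.2 := by
    have ht0 : 0 ≤ max ‖x‖ ‖y‖ := (norm_nonneg _).trans (le_max_left _ _)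
    apply Summable.of_norm_bounded (tdd_tau_summable k _ ht0 (max_lt hx hy))
    intro q
    rw [norm_mul, norm_mul, norm_pow, norm_pow, pow_add, mul_assoc]
    gcongr
    · exact le_max_left _ _
    · exact le_max_right _ _
  have hF := tdd_hasSum_antidiagonal _ hS
  have hE := funext (tdd_fiber k hk x y)
  rw [hE] at hD
  have hG := hF.unique hD
  rw [hG]
  have n1 := ne _ hx
  have n2 := ne _ hy
  have n3 := ne _ hxk
  have n4 := ne _ hyk
  rw [← tdd_e2, show ∑ l ∈ Finset.Icc 1 (k - 1), x ^ l * y ^ (k - l) = y * tddG x y k - y ^ k by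
    rw [tdd_e1 k hk]; ring]
  exact tdd_alg x y (x ^ k) (y ^ k) (tddG x y k) n1 n2 n3 n4

/-- A power series in two variables, absolutely convergent on the open unit bidisc, together with
its sum. -/
def TddEv (F : MvPowerSeries (Fin 2) ℂ) (f : ℂ → ℂ → ℂ) : Prop :=
  (∀ r : ℝ, 0 ≤ r → r < 1 →
    Summable fun e : Fin 2 →₀ ℕ => ‖MvPowerSeries.coeff e F‖ * r ^ (e 0 + e 1)) ∧
  ∀ x y : ℂ, ‖x‖ < 1 → ‖y‖ < 1 →
    ∑' e : Fin 2 →₀ ℕ, MvPowerSeries.coeff e F * x ^ (e 0) * y ^ (e 1) = f x y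

theorem tddEv_norm_summable {F : MvPowerSeries (Fin 2) ℂ}
    (h : ∀ r : ℝ, 0 ≤ r → r < 1 →
      Summable fun e : Fin 2 →₀ ℕ => ‖MvPowerSeries.coeff e F‖ * r ^ (e 0 + e 1))
    {x y : ℂ} (hx : ‖x‖ < 1) (hy : ‖y‖ < 1) :
    Summable fun e : Fin 2 →₀ ℕ => ‖MvPowerSeries.coeff e F * x ^ (e 0) * y ^ (e 1)‖ := by
  refine Summable.of_nonneg_of_le (fun _ => norm_nonneg _) (fun e => ?_)
    (h (max ‖x‖ ‖y‖) (le_max_of_le_left (norm_nonneg _)) (max_lt hx hy))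
  rw [norm_mul, norm_mul, norm_pow, norm_pow, mul_assoc, pow_add]
  have h1 : ‖x‖ ≤ max ‖x‖ ‖y‖ := le_max_left _ _
  have h2 : ‖y‖ ≤ max ‖x‖ ‖y‖ := le_max_right _ _
  gcongr

theorem TddEv.add {F G : MvPowerSeries (Fin 2) ℂ} {f g : ℂ → ℂ → ℂ} (hF : TddEv F f)
    (hG : TddEv G g) : TddEv (F + G) (fun x y => f x y + g x y) := by
  refine ⟨fun r h0 h1 => ?_, fun x y hx hy => ?_⟩
  · refine Summable.of_nonneg_of_le (fun e => by positivity) (fun e => ?_)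
      ((hF.1 r h0 h1).add (hG.1 r h0 h1))
    rw [map_add, ← add_mul]
    gcongr
    exact norm_add_le _ _
  · beta_reduce
    rw [← hF.2 x y hx hy, ← hG.2 x y hx hy,
      ← ((tddEv_norm_summable hF.1 hx hy).of_norm).tsum_add
        ((tddEv_norm_summable hG.1 hx hy).of_norm)]
    refine tsum_congr fun e => ?_
    rw [map_add]; ring

theorem TddEv.neg {F : MvPowerSeries (Fin 2) ℂ} {f : ℂ → ℂ → ℂ} (hF : TddEv F f) :
    TddEv (-F) (fun x y => - f x y) := by
  refine ⟨fun r h0 h1 => ?_, fun x y hx hy => ?_⟩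
  · simpa using hF.1 r h0 h1
  · beta_reduce
    rw [← hF.2 x y hx hy, ← tsum_neg]
    refine tsum_congr fun e => ?_
    rw [map_neg]; ring

theorem TddEv.sub {F G : MvPowerSeries (Fin 2) ℂ} {f g : ℂ → ℂ → ℂ} (hF : TddEv F f)
    (hG : TddEv G g) : TddEv (F - G) (fun x y => f x y - g x y) := by
  simp only [sub_eq_add_neg]
  exact hF.add hG.neg

theorem tdd_anti_real {A : Type*} [AddCommMonoid A] [Finset.HasAntidiagonal A] {f g : A → ℝ}
    (hf : Summable f) (hg : Summable g) (hf0 : ∀ a, 0 ≤ f a) (hg0 : ∀ a, 0 ≤ g a) :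
    Summable fun n => ∑ p ∈ Finset.HasAntidiagonal.antidiagonal n, f p.1 * g p.2 := by
  have h : Summable fun x : A × A => f x.1 * g x.2 := hf.mul_of_nonneg hg hf0 hg0
  exact summable_sum_mul_antidiagonal_of_summable_mul h

theorem tdd_anti_complex {A : Type*} [AddCommMonoid A] [Finset.HasAntidiagonal A] {f g : A → ℂ}
    (hf : Summable fun a => ‖f a‖) (hg : Summable fun a => ‖g a‖) :
    (∑' n, f n) * ∑' n, g n =
      ∑' n, ∑ p ∈ Finset.HasAntidiagonal.antidiagonal n, f p.1 * g p.2 := by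
  have h : Summable fun x : A × A => f x.1 * g x.2 := summable_mul_of_summable_norm hf hg
  exact Summable.tsum_mul_tsum_eq_tsum_sum_antidiagonal hf.of_norm hg.of_norm h

theorem TddEv.mul {F G : MvPowerSeries (Fin 2) ℂ} {f g : ℂ → ℂ → ℂ} (hF : TddEv F f)
    (hG : TddEv G g) : TddEv (F * G) (fun x y => f x y * g x y) := by
  classical
  refine ⟨fun r h0 h1 => ?_, fun x y hx hy => ?_⟩
  · have h := tdd_anti_real (hF.1 r h0 h1) (hG.1 r h0 h1) (fun e => by positivity)
      (fun e => by positivity)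
    refine Summable.of_nonneg_of_le (fun e => by positivity) (fun e => ?_) h
    rw [MvPowerSeries.coeff_mul]
    refine (mul_le_mul_of_nonneg_right (norm_sum_le _ _) (by positivity)).trans ?_
    rw [Finset.sum_mul]
    refine Finset.sum_le_sum fun p hp => ?_
    rw [Finset.HasAntidiagonal.mem_antidiagonal] at hp
    rw [← hp, norm_mul, Finsupp.add_apply, Finsupp.add_apply]
    apply le_of_eq
    ring
  · have a1 := tddEv_norm_summable hF.1 hx hy
    have a2 := tddEv_norm_summable hG.1 hx hy
    beta_reduce
    rw [← hF.2 x y hx hy, ← hG.2 x y hx hy,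
      tdd_anti_complex a1 a2]
    refine tsum_congr fun e => ?_
    rw [MvPowerSeries.coeff_mul, mul_assoc, Finset.sum_mul]
    refine Finset.sum_congr rfl fun p hp => ?_
    rw [Finset.HasAntidiagonal.mem_antidiagonal] at hp
    rw [← hp, Finsupp.add_apply, Finsupp.add_apply]
    ring

/-- The monomial `x ^ a * y ^ b`. -/
noncomputable def tddMon (a b : ℕ) : MvPowerSeries (Fin 2) ℂ :=
  MvPowerSeries.monomial (Finsupp.single 0 a + Finsupp.single 1 b) 1

theorem tddMon_coeff (a b : ℕ) (e : Fin 2 →₀ ℕ) :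
    MvPowerSeries.coeff e (tddMon a b) =
      if e = Finsupp.single 0 a + Finsupp.single 1 b then 1 else 0 := by
  classical
  rw [tddMon, MvPowerSeries.coeff_monomial]

theorem tddEv_mon (a b : ℕ) : TddEv (tddMon a b) (fun x y => x ^ a * y ^ b) := by
  refine ⟨fun r h0 h1 => ?_, fun x y hx hy => ?_⟩
  · refine summable_of_ne_finset_zero (s := {Finsupp.single 0 a + Finsupp.single 1 b}) ?_
    intro e he
    rw [Finset.mem_singleton] at he
    rw [tddMon_coeff, if_neg he]; simp
  · rw [tsum_eq_single (Finsupp.single 0 a + Finsupp.single 1 b)]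
    · rw [tddMon_coeff, if_pos rfl]; simp
    · intro e he
      rw [tddMon_coeff, if_neg he]; simp

theorem tddMon_zero : tddMon 0 0 = 1 := by
  classical
  ext e
  rw [tddMon_coeff, MvPowerSeries.coeff_one]; simp

theorem tddEv_one : TddEv 1 (fun _ _ => 1) := by
  have := tddEv_mon 0 0
  rw [tddMon_zero] at this
  simpa using this

theorem tddEv_zero : TddEv 0 (fun _ _ => 0) := by
  have := tddEv_one.sub tddEv_one
  simpa using this

theorem TddEv.sum {s : Finset ℕ} {F : ℕ → MvPowerSeries (Fin 2) ℂ} {f : ℕ → ℂ → ℂ → ℂ}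
    (h : ∀ l ∈ s, TddEv (F l) (f l)) : TddEv (∑ l ∈ s, F l) (fun x y => ∑ l ∈ s, f l x y) := by
  induction s using Finset.induction_on with
  | empty => simpa using tddEv_zero
  | insert a s ha ih =>
    simp only [Finset.sum_insert ha]
    exact (h a (Finset.mem_insert_self _ _)).add
      (ih fun l hl => h l (Finset.mem_insert_of_mem hl))

theorem TddEv.prod {s : Finset ℕ} {F : ℕ → MvPowerSeries (Fin 2) ℂ} {f : ℕ → ℂ → ℂ → ℂ}
    (h : ∀ l ∈ s, TddEv (F l) (f l)) : TddEv (∏ l ∈ s, F l) (fun x y => ∏ l ∈ s, f l x y) := by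
  induction s using Finset.induction_on with
  | empty => simpa using tddEv_one
  | insert a s ha ih =>
    simp only [Finset.prod_insert ha]
    exact (h a (Finset.mem_insert_self _ _)).mul
      (ih fun l hl => h l (Finset.mem_insert_of_mem hl))

open Classical in
/-- The geometric series `1 / (1 - x ^ a * y ^ b)`. -/
noncomputable def tddGeo (a b : ℕ) : MvPowerSeries (Fin 2) ℂ := fun e =>
  if ∃ n : ℕ, e = n • (Finsupp.single 0 a + Finsupp.single 1 b) then 1 else 0

open Classical in
theorem tddGeo_coeff (a b : ℕ) (e : Fin 2 →₀ ℕ) : MvPowerSeries.coeff e (tddGeo a b) =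
  if ∃ n : ℕ, e = n • (Finsupp.single 0 a + Finsupp.single 1 b) then 1 else 0 := rfl

theorem tddGeo_mul (a b : ℕ) (ha : 0 < a) : (1 - tddMon a b) * tddGeo a b = 1 := by
  classical
  ext e
  rw [sub_mul, one_mul, map_sub, tddMon, MvPowerSeries.coeff_monomial_mul,
    MvPowerSeries.coeff_one, tddGeo_coeff, tddGeo_coeff, one_mul]
  set d : Fin 2 →₀ ℕ := Finsupp.single 0 a + Finsupp.single 1 b with hd
  have hd0 : d 0 = a := by simp [hd]
  by_cases hde : d ≤ e
  · have he0 : e ≠ 0 := by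
      rintro rfl
      have := hde 0
      rw [hd0] at this
      simp at this
      omega
    rw [if_pos hde, if_neg he0]
    have : (∃ n : ℕ, e = n • d) ↔ ∃ n : ℕ, e - d = n • d := by
      constructor
      · rintro ⟨n, rfl⟩
        rcases n with _ | n
        · simp at he0
        · exact ⟨n, by rw [succ_nsmul, add_tsub_cancel_right]⟩
      · rintro ⟨n, hn⟩
        exact ⟨n + 1, by rw [succ_nsmul, ← hn, tsub_add_cancel_of_le hde]⟩
    simp only [this, sub_self]
  · rw [if_neg hde, sub_zero]
    have : (∃ n : ℕ, e = n • d) ↔ e = 0 := by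
      constructor
      · rintro ⟨n, rfl⟩
        rcases n with _ | n
        · simp
        · exact absurd (by rw [succ_nsmul]; exact le_add_self) hde
      · rintro rfl
        exact ⟨0, by simp⟩
    simp only [this]

/-- Exponent pairs. -/
noncomputable def tddEquiv : (Fin 2 →₀ ℕ) ≃ ℕ × ℕ := Finsupp.equivFunOnFinite.trans (finTwoArrowEquiv ℕ)

theorem tddEquiv_apply (e : Fin 2 →₀ ℕ) : tddEquiv e = (e 0, e 1) := rfl

theorem tddEv_geo (a b : ℕ) (ha : 0 < a) :
    TddEv (tddGeo a b) (fun x y => (1 - x ^ a * y ^ b)⁻¹) := by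
  have hs : ∀ r : ℝ, 0 ≤ r → r < 1 →
      Summable fun e : Fin 2 →₀ ℕ => ‖MvPowerSeries.coeff e (tddGeo a b)‖ * r ^ (e 0 + e 1) := by
    intro r h0 h1
    have hg := (summable_geometric_of_lt_one h0 h1)
    have h2 : Summable fun q : ℕ × ℕ => r ^ q.1 * r ^ q.2 :=
      hg.mul_of_nonneg hg (fun e => by positivity) (fun e => by positivity)
    have h3 := (tddEquiv.summable_iff (f := fun q : ℕ × ℕ => r ^ q.1 * r ^ q.2)).mpr h2
    refine Summable.of_nonneg_of_le (fun e => by positivity) (fun e => ?_) h3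
    simp only [Function.comp, tddEquiv_apply]
    rw [← pow_add]
    refine mul_le_of_le_one_left (by positivity) ?_
    rw [tddGeo_coeff]
    split_ifs <;> simp
  refine ⟨hs, fun x y hx hy => ?_⟩
  have h1 : TddEv (tddGeo a b) (fun x y =>
    ∑' e : Fin 2 →₀ ℕ, MvPowerSeries.coeff e (tddGeo a b) * x ^ (e 0) * y ^ (e 1)) :=
    ⟨hs, fun x y _ _ => rfl⟩
  have h2 := ((tddEv_one.sub (tddEv_mon a b)).mul h1).2 x y hx hy
  rw [tddGeo_mul a b ha, tddEv_one.2 x y hx hy] at h2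
  exact eq_inv_of_mul_eq_one_right h2.symm

/-- Vanishing to order `n`. -/
def TddVan (n : ℕ) (F : MvPowerSeries (Fin 2) ℂ) : Prop :=
  ∀ e : Fin 2 →₀ ℕ, e 0 + e 1 < n → MvPowerSeries.coeff e F = 0

theorem TddVan.mono {m n : ℕ} {F : MvPowerSeries (Fin 2) ℂ} (h : TddVan n F) (hmn : m ≤ n) :
    TddVan m F := fun e he => h e (by omega)

theorem TddVan.add {n : ℕ} {F G : MvPowerSeries (Fin 2) ℂ} (h : TddVan n F) (h' : TddVan n G) :
    TddVan n (F + G) := fun e he => by rw [map_add, h e he, h' e he, add_zero]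

theorem TddVan.sub {n : ℕ} {F G : MvPowerSeries (Fin 2) ℂ} (h : TddVan n F) (h' : TddVan n G) :
    TddVan n (F - G) := fun e he => by rw [map_sub, h e he, h' e he, sub_zero]

theorem TddVan.mul {m n : ℕ} {F G : MvPowerSeries (Fin 2) ℂ} (h : TddVan m F)
    (h' : TddVan n G) : TddVan (m + n) (F * G) := by
  classical
  intro e he
  rw [MvPowerSeries.coeff_mul]
  refine Finset.sum_eq_zero fun p hp => ?_
  rw [Finset.HasAntidiagonal.mem_antidiagonal] at hp
  rw [← hp, Finsupp.add_apply, Finsupp.add_apply] at he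
  by_cases h1 : p.1 0 + p.1 1 < m
  · rw [h _ h1, zero_mul]
  · rw [h' p.2 (by omega), mul_zero]

theorem tddVan_zero (F : MvPowerSeries (Fin 2) ℂ) : TddVan 0 F := fun e he => by omega

theorem tddVan_zero' (n : ℕ) : TddVan n 0 := fun e _ => by simp

theorem TddVan.mul_right {n : ℕ} {F : MvPowerSeries (Fin 2) ℂ} (h : TddVan n F)
    (G : MvPowerSeries (Fin 2) ℂ) : TddVan n (F * G) := h.mul (tddVan_zero G)

theorem TddVan.sum {n : ℕ} {s : Finset ℕ} {F : ℕ → MvPowerSeries (Fin 2) ℂ}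
    (h : ∀ l ∈ s, TddVan n (F l)) : TddVan n (∑ l ∈ s, F l) := fun e he => by
  rw [map_sum]
  exact Finset.sum_eq_zero fun l hl => h l hl e he

theorem tddVan_mon (a b : ℕ) : TddVan (a + b) (tddMon a b) := by
  intro e he
  rw [tddMon_coeff, if_neg]
  rintro rfl
  simp at he

theorem tddVan_prod (n : ℕ) (s : Finset ℕ) (F : ℕ → MvPowerSeries (Fin 2) ℂ)
    (h : ∀ l ∈ s, TddVan n (F l)) :
    TddVan (n + n) (∏ l ∈ s, (1 - F l) - (1 - ∑ l ∈ s, F l)) := by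
  induction s using Finset.induction_on with
  | empty => simpa using tddVan_zero' _
  | insert a s ha ih =>
    have h1 := ih fun l hl => h l (Finset.mem_insert_of_mem hl)
    have h2 := h a (Finset.mem_insert_self _ _)
    have h3 : TddVan n (∑ l ∈ s, F l) := TddVan.sum fun l hl => h l (Finset.mem_insert_of_mem hl)
    rw [Finset.prod_insert ha, Finset.sum_insert ha]
    have : (1 - F a) * ∏ l ∈ s, (1 - F l) - (1 - (F a + ∑ l ∈ s, F l)) =
      (∏ l ∈ s, (1 - F l) - (1 - ∑ l ∈ s, F l)) * (1 - F a) + F a * ∑ l ∈ s, F l := by ring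
    rw [this]
    exact (h1.mul_right _).add (h2.mul h3)

/-- The local factor. -/
noncomputable def tddF (k : ℕ) : MvPowerSeries (Fin 2) ℂ :=
  (1 + ∑ l ∈ Finset.Icc 1 (k - 1), tddMon l (k - l) -
    ∑ l ∈ Finset.Icc 1 k, tddMon l (k + 1 - l)) *
  (∏ l ∈ Finset.Icc 1 (k - 1), (1 - tddMon l (k - l))) *
  ∏ l ∈ Finset.Icc 1 k, tddGeo l (k + 1 - l)

theorem tddEv_F (k : ℕ) : TddEv (tddF k) (fun x y =>
    (1 + ∑ l ∈ Finset.Icc 1 (k - 1), x ^ l * y ^ (k - l) -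
      ∑ l ∈ Finset.Icc 1 k, x ^ l * y ^ (k + 1 - l)) *
    (∏ l ∈ Finset.Icc 1 (k - 1), (1 - x ^ l * y ^ (k - l))) *
    ∏ l ∈ Finset.Icc 1 k, (1 - x ^ l * y ^ (k + 1 - l))⁻¹) := by
  refine TddEv.mul (TddEv.mul (TddEv.sub (TddEv.add tddEv_one (TddEv.sum fun l _ => tddEv_mon _ _))
    (TddEv.sum fun l _ => tddEv_mon _ _)) (TddEv.prod fun l _ => tddEv_one.sub (tddEv_mon _ _)))
    (TddEv.prod fun l hl => tddEv_geo _ _ (Finset.mem_Icc.mp hl).1)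

theorem tddVan_F (k : ℕ) (hk : 1 ≤ k) : TddVan (k + 2) (tddF k - 1) := by
  have hgeo : (∏ l ∈ Finset.Icc 1 k, (1 - tddMon l (k + 1 - l))) *
      ∏ l ∈ Finset.Icc 1 k, tddGeo l (k + 1 - l) = 1 := by
    rw [← Finset.prod_mul_distrib]
    exact Finset.prod_eq_one fun l hl => tddGeo_mul _ _ (Finset.mem_Icc.mp hl).1
  have hBl : ∀ l ∈ Finset.Icc 1 k, TddVan (k + 1) (tddMon l (k + 1 - l)) := fun l hl => by
    rw [Finset.mem_Icc] at hl
    exact (tddVan_mon l (k + 1 - l)).mono (by omega)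
  have hAl : ∀ l ∈ Finset.Icc 1 (k - 1), TddVan k (tddMon l (k - l)) := fun l hl => by
    rw [Finset.mem_Icc] at hl
    exact (tddVan_mon l (k - l)).mono (by omega)
  have hE' := (tddVan_prod _ _ _ hBl).mono (show k + 2 ≤ _ by omega)
  have hB := TddVan.sum hBl
  have hA := TddVan.sum hAl
  have hE := tddVan_prod _ _ _ hAl
  have hAA := hA.mul hA
  have hAB := (hA.mul hB).mono (show k + 2 ≤ _ by omega)
  have hEA : TddVan (k + 2) (∏ l ∈ Finset.Icc 1 (k - 1), (1 - tddMon l (k - l)) -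
        (1 - ∑ l ∈ Finset.Icc 1 (k - 1), tddMon l (k - l))) ∧ TddVan (k + 2)
      ((∑ l ∈ Finset.Icc 1 (k - 1), tddMon l (k - l)) *
        ∑ l ∈ Finset.Icc 1 (k - 1), tddMon l (k - l)) := by
    rcases Nat.lt_or_ge 1 k with h | h
    · exact ⟨hE.mono (by omega), hAA.mono (by omega)⟩
    · obtain rfl : k = 1 := by omega
      constructor
      · simpa using tddVan_zero' _
      · simpa using tddVan_zero' _
  obtain ⟨hE2, hAA2⟩ := hEA
  rw [tddF]
  set A := ∑ l ∈ Finset.Icc 1 (k - 1), tddMon l (k - l)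
  set B := ∑ l ∈ Finset.Icc 1 k, tddMon l (k + 1 - l)
  set PA := ∏ l ∈ Finset.Icc 1 (k - 1), (1 - tddMon l (k - l))
  set PB := ∏ l ∈ Finset.Icc 1 k, (1 - tddMon l (k + 1 - l))
  set G := ∏ l ∈ Finset.Icc 1 k, tddGeo l (k + 1 - l)
  have key : (1 + A - B) * PA * G - 1 =
      (((PA - (1 - A)) * (1 + A - B) - A * A + A * B) - (PB - (1 - B))) * G := by
    linear_combination hgeo
  rw [key]
  exact ((((hE2.mul_right _).sub hAA2).add hAB).sub hE').mul_right _

/-- Coefficients of the local factor. -/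
noncomputable def tddC (k i j : ℕ) : ℂ := MvPowerSeries.coeff (tddEquiv.symm (i, j)) (tddF k)

theorem tddC_zero (k : ℕ) (hk : 1 ≤ k) : tddC k 0 0 = 1 := by
  have h0 : tddEquiv.symm (0, 0) = 0 := by
    rw [Equiv.symm_apply_eq]; rfl
  have h := tddVan_F k hk 0 (by simp)
  rw [map_sub, MvPowerSeries.coeff_zero_one, sub_eq_zero] at h
  rw [tddC, h0, h]

theorem tddC_van (k : ℕ) (hk : 1 ≤ k) (i j : ℕ) (h0 : 0 < i + j) (h : i + j < k + 2) :
    tddC k i j = 0 := by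
  classical
  obtain ⟨e, he⟩ := tddEquiv.surjective (i, j)
  have he' := he
  rw [tddEquiv_apply, Prod.mk.injEq] at he'
  have h := tddVan_F k hk e (by omega)
  rw [map_sub, MvPowerSeries.coeff_one, if_neg, sub_zero] at h
  · rw [tddC, ← he, Equiv.symm_apply_apply, h]
  · rintro rfl
    simp at he'
    omega

theorem tddC_summable (k : ℕ) (r : ℝ) (h0 : 0 ≤ r) (h1 : r < 1) :
    Summable fun q : ℕ × ℕ => ‖tddC k q.1 q.2‖ * r ^ (q.1 + q.2) := by
  rw [← tddEquiv.summable_iff]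
  refine ((tddEv_F k).1 r h0 h1).congr fun e => ?_
  simp only [Function.comp, tddC, Prod.mk.eta, Equiv.symm_apply_apply]
  rfl

theorem tddC_tsum (k : ℕ) {x y : ℂ} (hx : ‖x‖ < 1) (hy : ‖y‖ < 1) :
    ∑' q : ℕ × ℕ, tddC k q.1 q.2 * x ^ q.1 * y ^ q.2 =
    (1 + ∑ l ∈ Finset.Icc 1 (k - 1), x ^ l * y ^ (k - l) -
      ∑ l ∈ Finset.Icc 1 k, x ^ l * y ^ (k + 1 - l)) *
    (∏ l ∈ Finset.Icc 1 (k - 1), (1 - x ^ l * y ^ (k - l))) *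
    ∏ l ∈ Finset.Icc 1 k, (1 - x ^ l * y ^ (k + 1 - l))⁻¹ := by
  refine Eq.trans ?_ ((tddEv_F k).2 x y hx hy)
  rw [← tddEquiv.tsum_eq]
  refine tsum_congr fun e => ?_
  simp only [tddC, Prod.mk.eta, Equiv.symm_apply_apply]
  rfl

theorem tdd_zeta_hasProd (z w : ℂ) (hz : 1 < z.re) (hw : 1 < w.re) (a b : ℕ) (hab : 1 ≤ a + b) :
    HasProd (fun p : Nat.Primes => (1 - ((p : ℂ) ^ (-z)) ^ a * ((p : ℂ) ^ (-w)) ^ b)⁻¹)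
      (riemannZeta ((a : ℂ) * z + (b : ℂ) * w)) ∧
    riemannZeta ((a : ℂ) * z + (b : ℂ) * w) ≠ 0 := by
  have hre : 1 < ((a : ℂ) * z + (b : ℂ) * w).re := by
    have e : ((a : ℂ) * z + (b : ℂ) * w).re = a * z.re + b * w.re := by simp
    rw [e]
    rcases Nat.eq_zero_or_pos a with rfl | ha
    · have hb : (1 : ℝ) ≤ b := by exact_mod_cast (by omega : 1 ≤ b)
      simp only [Nat.cast_zero]
      nlinarith
    · have ha : (1 : ℝ) ≤ a := by exact_mod_cast ha
      have hb : (0 : ℝ) ≤ b := by positivity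
      nlinarith
  refine ⟨?_, riemannZeta_ne_zero_of_one_lt_re hre⟩
  have h := riemannZeta_eulerProduct_hasProd hre
  refine (congrArg (fun g => HasProd g _) ?_).mpr h
  funext p
  have hp : (p : ℂ) ≠ 0 := by exact_mod_cast p.2.ne_zero
  congr 2
  rw [← Complex.cpow_nat_mul, ← Complex.cpow_nat_mul, ← Complex.cpow_add _ _ hp]
  congr 1
  ring

theorem tdd_prime_norm (z : ℂ) (hz : 1 < z.re) (p : Nat.Primes) : ‖(p : ℂ) ^ (-z)‖ < 1 := by
  rw [Complex.norm_natCast_cpow_of_pos p.2.pos]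
  apply Real.rpow_lt_one_of_one_lt_of_neg
  · exact_mod_cast p.2.one_lt
  · rw [Complex.neg_re]; linarith

theorem tdd_mon_ne {x y : ℂ} (hx : ‖x‖ < 1) (hy : ‖y‖ < 1) (a b : ℕ) (hab : 1 ≤ a + b) :
    1 - x ^ a * y ^ b ≠ 0 := by
  intro h
  have h1 : ‖x ^ a * y ^ b‖ = 1 := by rw [← sub_eq_zero.mp h, norm_one]
  have h2 : ‖x ^ a * y ^ b‖ < 1 := by
    rw [norm_mul, norm_pow, norm_pow]
    have hx1 : ‖x‖ ^ a ≤ 1 := pow_le_one₀ (norm_nonneg _) hx.le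
    have hy1 : ‖y‖ ^ b ≤ 1 := pow_le_one₀ (norm_nonneg _) hy.le
    rcases Nat.eq_zero_or_pos a with rfl | ha
    · have : ‖y‖ ^ b < 1 := pow_lt_one₀ (norm_nonneg _) hy (by omega)
      simpa using this
    · have : ‖x‖ ^ a < 1 := pow_lt_one₀ (norm_nonneg _) hx (by omega)
      exact mul_lt_one_of_nonneg_of_lt_one_left (by positivity) this hy1
  linarith

theorem tdd_range_split (k : ℕ) (hk : 1 ≤ k) (f : ℕ → ℂ) :
    ∏ l ∈ Finset.range (k + 1), f l = f 0 * f k * ∏ l ∈ Finset.Icc 1 (k - 1), f l := by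
  rw [Finset.prod_range_succ, Finset.prod_range_eq_mul_Ico f (by omega)]
  have : Finset.Ico 1 k = Finset.Icc 1 (k - 1) := by
    ext l; simp only [Finset.mem_Ico, Finset.mem_Icc]; omega
  rw [this]; ring

theorem tdd_local_identity (k : ℕ) (hk : 1 ≤ k) {x y : ℂ} (hx : ‖x‖ < 1) (hy : ‖y‖ < 1) :
    (∑' q : ℕ × ℕ, (((q.1 + q.2) / k + 1 : ℕ) : ℂ) * x ^ q.1 * y ^ q.2) *
      ∏ l ∈ Finset.Icc 1 k, (1 - x ^ l * y ^ (k + 1 - l))⁻¹ =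
    (1 - x ^ 1 * y ^ 0)⁻¹ * (1 - x ^ 0 * y ^ 1)⁻¹ *
      (∏ l ∈ Finset.range (k + 1), (1 - x ^ l * y ^ (k - l))⁻¹) *
      ∑' q : ℕ × ℕ, tddC k q.1 q.2 * x ^ q.1 * y ^ q.2 := by
  rw [tddC_tsum k hx hy, ← tdd_T k hk hx hy, tdd_range_split k hk]
  have h1 := tdd_mon_ne hx hy 1 0 (by omega)
  have h2 := tdd_mon_ne hx hy 0 1 (by omega)
  have h3 := tdd_mon_ne hx hy k 0 (by omega)
  have h4 := tdd_mon_ne hx hy 0 k (by omega)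
  have h5 : (∏ l ∈ Finset.Icc 1 (k - 1), (1 - x ^ l * y ^ (k - l))⁻¹) *
      ∏ l ∈ Finset.Icc 1 (k - 1), (1 - x ^ l * y ^ (k - l)) = 1 := by
    rw [← Finset.prod_mul_distrib]
    refine Finset.prod_eq_one fun l hl => inv_mul_cancel₀ (tdd_mon_ne hx hy _ _ ?_)
    have := Finset.mem_Icc.mp hl
    omega
  simp only [pow_zero, pow_one, mul_one, one_mul, Nat.sub_zero, Nat.sub_self] at h1 h2 h3 h4 ⊢
  generalize (∏ l ∈ Finset.Icc 1 (k - 1), (1 - x ^ l * y ^ (k - l))⁻¹) = a at *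
  generalize (∏ l ∈ Finset.Icc 1 (k - 1), (1 - x ^ l * y ^ (k - l))) = b at *
  generalize (∏ l ∈ Finset.Icc 1 k, (1 - x ^ l * y ^ (k + 1 - l))⁻¹) = c at *
  generalize (∑' q : ℕ × ℕ, (((q.1 + q.2) / k + 1 : ℕ) : ℂ) * x ^ q.1 * y ^ q.2) = t at *
  field_simp
  linear_combination (-t * c) * h5

/-- For `k ≥ 1` there is a double Dirichlet series `H_k(z,w) = ∑ h(m,n) m^{-z} n^{-w}`,
absolutely convergent for `Re z, Re w > 1/(k+2)`, such that for `Re z, Re w > 1`,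
`∑_{m,n ≥ 1} τ_{1,k}(mn) m^{-z} n^{-w} = ζ(z) ζ(w)
  (∏_{l=0}^k ζ(lz+(k-l)w)) / (∏_{l=1}^k ζ(lz+(k+1-l)w)) · H_k(z,w)`. -/
theorem tau1k_double_dirichlet_series (k : ℕ) (hk : 1 ≤ k) :
    ∃ h : ℕ × ℕ → ℂ,
      (∀ σ₁ σ₂ : ℝ, 1 / (k + 2 : ℝ) < σ₁ → 1 / (k + 2 : ℝ) < σ₂ →
        Summable (fun q : ℕ × ℕ => ‖h q‖ * (q.1 : ℝ) ^ (-σ₁) * (q.2 : ℝ) ^ (-σ₂))) ∧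
      ∀ z w : ℂ, 1 < z.re → 1 < w.re →
        ∑' q : ℕ × ℕ, (tau1k k (q.1 * q.2) : ℂ) * (q.1 : ℂ) ^ (-z) * (q.2 : ℂ) ^ (-w) =
          riemannZeta z * riemannZeta w *
            ((∏ l ∈ Finset.range (k + 1), riemannZeta ((l : ℂ) * z + ((k - l : ℕ) : ℂ) * w)) /
              ∏ l ∈ Finset.Icc 1 k, riemannZeta ((l : ℂ) * z + ((k + 1 - l : ℕ) : ℂ) * w)) *
            ∑' q : ℕ × ℕ, h q * (q.1 : ℂ) ^ (-z) * (q.2 : ℂ) ^ (-w) := by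
  refine ⟨tddH (tddC k), fun σ₁ σ₂ h1 h2 => ?_, fun z w hz hw => ?_⟩
  · have hpos : (0 : ℝ) < k + 2 := by positivity
    rw [div_lt_iff₀ hpos] at h1 h2
    refine tdd_real_summable (tddC k) (tddC_zero k hk) (k + 2) (tddC_van k hk)
      (tddC_summable k) σ₁ σ₂ ?_ ?_
    · push_cast; linarith
    · push_cast; linarith
  · have hk2 : (1 : ℝ) ≤ ((k + 2 : ℕ) : ℝ) := by exact_mod_cast (by omega : 1 ≤ k + 2)
    have HH := tdd_hasProd (tddC k) (tddC_zero k hk) (k + 2) (tddC_van k hk)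
      (tddC_summable k) z w (by linarith) (by linarith) (by nlinarith) (by nlinarith)
    have HT := tdd_hasProd (fun i j => (((i + j) / k + 1 : ℕ) : ℂ)) (by simp) 1
      (fun i j h0 h1 => by omega) (fun r h0 h1 => tdd_tau_summable k r h0 h1) z w
      (by linarith) (by linarith) (by simpa using hz) (by simpa using hw)
    have HD : HasProd (fun p : Nat.Primes => ∏ l ∈ Finset.Icc 1 k,
        (1 - ((p : ℂ) ^ (-z)) ^ l * ((p : ℂ) ^ (-w)) ^ (k + 1 - l))⁻¹)
        (∏ l ∈ Finset.Icc 1 k, riemannZeta ((l : ℂ) * z + ((k + 1 - l : ℕ) : ℂ) * w)) :=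
      hasProd_prod fun l hl => (tdd_zeta_hasProd z w hz hw l (k + 1 - l) (by omega)).1
    have HN : HasProd (fun p : Nat.Primes => ∏ l ∈ Finset.range (k + 1),
        (1 - ((p : ℂ) ^ (-z)) ^ l * ((p : ℂ) ^ (-w)) ^ (k - l))⁻¹)
        (∏ l ∈ Finset.range (k + 1), riemannZeta ((l : ℂ) * z + ((k - l : ℕ) : ℂ) * w)) :=
      hasProd_prod fun l hl => (tdd_zeta_hasProd z w hz hw l (k - l) (by omega)).1
    have Hz := (tdd_zeta_hasProd z w hz hw 1 0 (by omega)).1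
    have Hw := (tdd_zeta_hasProd z w hz hw 0 1 (by omega)).1
    have L := HT.mul HD
    have R := ((Hz.mul Hw).mul HN).mul HH
    have hfun := funext fun p : Nat.Primes =>
      tdd_local_identity k hk (tdd_prime_norm z hz p) (tdd_prime_norm w hw p)
    have L' := (congrArg (fun g => HasProd g _) hfun).mp L
    have E := HasProd.unique L' R
    have hne : ∏ l ∈ Finset.Icc 1 k,
        riemannZeta ((l : ℂ) * z + ((k + 1 - l : ℕ) : ℂ) * w) ≠ 0 :=
      Finset.prod_ne_zero_iff.mpr fun l hl =>
        (tdd_zeta_hasProd z w hz hw l (k + 1 - l) (by omega)).2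
    simp only [Nat.cast_one, Nat.cast_zero, one_mul, zero_mul, add_zero, zero_add] at E
    have hl : ∑' q : ℕ × ℕ, (tau1k k (q.1 * q.2) : ℂ) * (q.1 : ℂ) ^ (-z) * (q.2 : ℂ) ^ (-w) =
        ∑' q : ℕ × ℕ, tddH (fun i j => (((i + j) / k + 1 : ℕ) : ℂ)) q *
          (q.1 : ℂ) ^ (-z) * (q.2 : ℂ) ^ (-w) :=
      tsum_congr fun q => by rw [tdd_tau_eq_tddH k hk q]
    rw [hl, eq_div_of_mul_eq hne E]
    ring
end
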